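/- arXiv:1410.0346 — 4 statements merged into one kernel-verified Lean document; each statement's English description precedes it below -/
import Mathlib

section
/- Let M, n ≥ 1 with M ≤ √n(exp(n) − 1), and let μ̂_j = A_j y + b_j (j = 1,…,M), with noise ξ ~ N(0, σ² I_n). Assume that for some R > 0: (1/n)‖f‖² ≤ R², (1/n)‖b_j‖² ≤ R² and ‖A_j‖_op ≤ 1 for all j. Set m = ⌊√(n / log(1 + M/√n))⌋ and let Λ^M_m = { (1/m)Σ_{q=1}^m u_q : u_1,…,u_m ∈ {e_1,…,e_M} }. Let μ̂_{Λ^M_m} be the estimator obtained by applying the penalized procedure minimizing H_pen to the finite family of affine estimators (μ̂_u)_{u ∈ Λ^M_m}. Then there exists an absolute constant C > 0 such that for every x > 0, with probability at least 1 − 3exp(−x), (1/n)‖μ̂_{Λ^M_m} − f‖² ≤ min_{θ∈Λ^M} (1/n)‖μ̂_θ − f‖² + C max(R², σ²)√(log(1 + M/√n)/n) + Cσ²x/n. -/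
open MeasureTheory ProbabilityTheory Finset

noncomputable section

/-- Squared Euclidean norm on `Fin n → ℝ`. -/
def sqNorm {n : ℕ} (v : Fin n → ℝ) : ℝ := ∑ i, (v i) ^ 2

/-- The simplex `Λ^M` of probability vectors in `ℝ^M`. -/
def simplex (M : ℕ) : Set (Fin M → ℝ) := {θ | (∀ j, 0 ≤ θ j) ∧ ∑ j, θ j = 1}

/-- Operator norm (ℓ²→ℓ²) of a square matrix. -/
def opNorm {n : ℕ} (A : Matrix (Fin n) (Fin n) ℝ) : ℝ :=
  sSup {c | ∃ x : Fin n → ℝ, sqNorm x ≤ 1 ∧ c = Real.sqrt (sqNorm (A.mulVec x))}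

/-- The distribution of a vector with i.i.d. `N(0,σ²)` coordinates. -/
def gaussPi (n : ℕ) (σ : ℝ) : Measure (Fin n → ℝ) :=
  Measure.pi fun _ => gaussianReal 0 ⟨σ ^ 2, sq_nonneg σ⟩

/-- The aggregated affine estimator `μ̂_θ = A_θ y + b_θ = ∑_j θ_j (A_j y + b_j)`. -/
def muV {n M : ℕ} (A : Fin M → Matrix (Fin n) (Fin n) ℝ) (b : Fin M → Fin n → ℝ)
    (y : Fin n → ℝ) (θ : Fin M → ℝ) : Fin n → ℝ :=
  ∑ j, θ j • ((A j).mulVec y + b j)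

/-- Mallows' `C_p` criterion. -/
def Cp {n M : ℕ} (A : Fin M → Matrix (Fin n) (Fin n) ℝ) (b : Fin M → Fin n → ℝ)
    (σ : ℝ) (y : Fin n → ℝ) (θ : Fin M → ℝ) : ℝ :=
  sqNorm (muV A b y θ) - 2 * ∑ i, y i * muV A b y θ i
    + 2 * σ ^ 2 * ∑ j, θ j * (A j).trace

/-- The penalty `pen(θ) = ∑_j θ_j ‖μ̂_θ - μ̂_j‖²`. -/
def pen {n M : ℕ} (A : Fin M → Matrix (Fin n) (Fin n) ℝ) (b : Fin M → Fin n → ℝ)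
    (y : Fin n → ℝ) (θ : Fin M → ℝ) : ℝ :=
  ∑ j, θ j * sqNorm (muV A b y θ - ((A j).mulVec y + b j))

/-- The penalized criterion `H_pen(θ) = C_p(θ) + pen(θ)/2`. -/
def Hpen {n M : ℕ} (A : Fin M → Matrix (Fin n) (Fin n) ℝ) (b : Fin M → Fin n → ℝ)
    (σ : ℝ) (y : Fin n → ℝ) (θ : Fin M → ℝ) : ℝ :=
  Cp A b σ y θ + pen A b y θ / 2

/-- The point of the grid `Λ^M_m` associated with a tuple `(u_1,…,u_m)` of vertices:
`(1/m) ∑_q e_{u_q}`. -/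
def gridPoint (M m : ℕ) (u : Fin m → Fin M) : Fin M → ℝ :=
  fun j => (∑ q, if u q = j then (1 : ℝ) else 0) / m

/-- The aggregate `ν_λ` of the family `(μ̂_{gridPoint u})_u` with weights `λ`. -/
def nuGrid {n M m : ℕ} (A : Fin M → Matrix (Fin n) (Fin n) ℝ) (b : Fin M → Fin n → ℝ)
    (y : Fin n → ℝ) (lam : (Fin m → Fin M) → ℝ) : Fin n → ℝ :=
  ∑ u, lam u • muV A b y (gridPoint M m u)

/-- The penalized criterion `H_pen` for the family `(μ̂_u)_{u ∈ Λ^M_m}`. -/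
def HpenGrid {n M m : ℕ} (A : Fin M → Matrix (Fin n) (Fin n) ℝ) (b : Fin M → Fin n → ℝ)
    (σ : ℝ) (y : Fin n → ℝ) (lam : (Fin m → Fin M) → ℝ) : ℝ :=
  sqNorm (nuGrid A b y lam) - 2 * ∑ i, y i * nuGrid A b y lam i
    + 2 * σ ^ 2 * ∑ u, lam u * ∑ j, gridPoint M m u j * (A j).trace
    + (1 / 2) * ∑ u, lam u * sqNorm (nuGrid A b y lam - muV A b y (gridPoint M m u))

/-- The simplex of weights indexed by the tuples `Fin m → Fin M`. -/
def simplexGrid (M m : ℕ) : Set ((Fin m → Fin M) → ℝ) :=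
  {lam | (∀ u, 0 ≤ lam u) ∧ ∑ u, lam u = 1}

open scoped Matrix

lemma aux_exp (d : ℝ) (hd : d ≤ 1/4) : 1 ≤ (1 - 2*d) * Real.exp (2*d + 4*d^2) := by
  rcases le_total 0 d with h | h
  · have h1 := Real.quadratic_le_exp_of_nonneg (x := 2*d+4*d^2) (by positivity)
    have h2 : 0 < 1 - 2*d := by linarith
    have h3 : 1 ≤ (1-2*d) * (1 + (2*d+4*d^2) + (2*d+4*d^2)^2/2) := by
      have : (1-2*d) * (1 + (2*d+4*d^2) + (2*d+4*d^2)^2/2) - 1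
        = 2*d^2 * (1 - 2*d - 4*d^2 - 8*d^3) := by ring
      have h4 : 0 ≤ 1 - 2*d - 4*d^2 - 8*d^3 := by
        have : d^2 ≤ (1/4)^2 := by gcongr
        have : d^3 ≤ (1/4)^3 := by gcongr
        linarith
      nlinarith [mul_nonneg (sq_nonneg d) h4]
    nlinarith
  · have h1 := Real.add_one_le_exp (2*d+4*d^2)
    have h2 : 0 < 1 - 2*d := by linarith
    have : 1 ≤ (1-2*d) * (2*d+4*d^2+1) := by
      have : (1-2*d) * (2*d+4*d^2+1) - 1 = 8 * (-d) * d^2 := by ring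
      nlinarith [mul_nonneg (neg_nonneg.mpr h) (sq_nonneg d)]
    nlinarith

lemma gauss1 (d h : ℝ) (hd : d ≤ 1/4) :
    ∫⁻ z, ENNReal.ofReal (Real.exp (d*z^2 + h*z)) ∂(gaussianReal 0 1)
      ≤ ENNReal.ofReal (Real.exp (d + 2*d^2 + h^2)) := by
  have h2 : 0 < 1 - 2*d := by linarith
  set v : ℝ := 1 / (1 - 2*d) with hv
  have hvpos : 0 < v := by positivity
  obtain ⟨v', hcoe⟩ : ∃ v' : NNReal, (v' : ℝ) = v := ⟨v.toNNReal, Real.coe_toNNReal _ hvpos.le⟩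
  have hv' : v' ≠ 0 := by
    intro h; apply hvpos.ne'; rw [← hcoe, h]; rfl
  have hv2 : v ≤ 2 := by rw [hv, div_le_iff₀ h2]; linarith
  have hve : v ≤ Real.exp (2*d+4*d^2) := by
    rw [hv, div_le_iff₀ h2]; linarith [aux_exp d hd]
  have hsq : Real.sqrt v ≤ Real.exp (d + 2*d^2) := by
    rw [Real.sqrt_le_left (Real.exp_pos _).le, ← Real.exp_nat_mul]
    convert hve using 2; push_cast; ring
  rw [gaussianReal_of_var_ne_zero _ one_ne_zero,
    lintegral_withDensity_eq_lintegral_mul _ (measurable_gaussianPDF _ _) (by fun_prop)]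
  have key : ∀ z, (gaussianPDF 0 1 * fun z => ENNReal.ofReal (Real.exp (d*z^2 + h*z))) z
      = ENNReal.ofReal (Real.sqrt v * Real.exp (h^2*v/2)) * gaussianPDF (h*v) v' z := by
    intro z
    simp only [Pi.mul_apply, gaussianPDF]
    rw [← ENNReal.ofReal_mul (gaussianPDFReal_nonneg _ _ _), ← ENNReal.ofReal_mul (by positivity)]
    congr 1
    simp only [gaussianPDFReal, NNReal.coe_one, hcoe, sub_zero]
    have e1 : Real.sqrt (2*Real.pi*v) = Real.sqrt (2*Real.pi) * Real.sqrt v :=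
      Real.sqrt_mul (by positivity) _
    have hsv : Real.sqrt v ≠ 0 := (Real.sqrt_pos.mpr hvpos).ne'
    have hsp : Real.sqrt (2*Real.pi) ≠ 0 := (Real.sqrt_pos.mpr (by positivity)).ne'
    have e2 : Real.sqrt v * Real.exp (h^2*v/2) * ((Real.sqrt (2*Real.pi*v))⁻¹ * Real.exp (-(z - h*v)^2/(2*v)))
       = (Real.sqrt (2*Real.pi))⁻¹ * (Real.exp (h^2*v/2) * Real.exp (-(z - h*v)^2/(2*v))) := by
      rw [e1]; field_simp
    rw [e2, mul_one, mul_assoc, ← Real.exp_add, ← Real.exp_add]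
    congr 2
    have : d = (1 - 1/v)/2 := by rw [hv]; field_simp; ring
    rw [this]; field_simp; ring
  simp_rw [key]
  rw [lintegral_const_mul _ (measurable_gaussianPDF _ _), lintegral_gaussianPDF_eq_one _ hv', mul_one]
  apply ENNReal.ofReal_le_ofReal
  rw [Real.exp_add]
  gcongr
  nlinarith [sq_nonneg h]

abbrev stdG (n : ℕ) : Measure (Fin n → ℝ) := Measure.pi fun _ => gaussianReal 0 1

lemma rot {n : ℕ} {S : Matrix (Fin n) (Fin n) ℝ} (hS : S.IsHermitian) :
    (stdG n).map (fun x => (hS.eigenvectorUnitary : Matrix (Fin n) (Fin n) ℝ) *ᵥ x) = stdG n := by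
  have h1 := map_pi_eq_stdGaussian (ι := Fin n)
  have h2 := stdGaussian_eq_map_pi_orthonormalBasis (hS.eigenvectorBasis)
  have h3 := h1.trans h2
  have h4 := congrArg (fun μ => μ.map (WithLp.ofLp)) h3
  rw [Measure.map_map (by fun_prop) (by fun_prop), Measure.map_map (by fun_prop) (by fun_prop)] at h4
  have e1 : (WithLp.ofLp ∘ WithLp.toLp 2 : (Fin n → ℝ) → (Fin n → ℝ)) = id := rfl
  rw [e1, Measure.map_id] at h4
  refine Eq.trans ?_ h4.symm
  congr 1
  ext x i
  simp [Matrix.mulVec, dotProduct, mul_comm]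

lemma gaussQuad {n : ℕ} (S : Matrix (Fin n) (Fin n) ℝ) (hS : S.IsHermitian) (h : Fin n → ℝ)
    (hb : ∀ z : Fin n → ℝ, z ⬝ᵥ S *ᵥ z ≤ 1/4 * (z ⬝ᵥ z)) :
    ∫⁻ z, ENNReal.ofReal (Real.exp (z ⬝ᵥ S *ᵥ z + h ⬝ᵥ z)) ∂(stdG n)
      ≤ ENNReal.ofReal (Real.exp (S.trace + 2 * (S * S).trace + h ⬝ᵥ h)) := by
  set U : Matrix (Fin n) (Fin n) ℝ := (hS.eigenvectorUnitary : Matrix (Fin n) (Fin n) ℝ) with hU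
  set d := hS.eigenvalues with hd
  have hUU : Uᵀ * U = 1 := by
    have := Unitary.coe_star_mul_self hS.eigenvectorUnitary
    simpa [Matrix.star_eq_conjTranspose] using this
  have hUU' : U * Uᵀ = 1 := by
    have := Unitary.coe_mul_star_self hS.eigenvectorUnitary
    simpa [Matrix.star_eq_conjTranspose] using this
  have hspec : S = U * Matrix.diagonal d * Uᵀ := by
    have := hS.spectral_theorem
    rw [Unitary.conjStarAlgAut_apply] at this
    simpa [Matrix.star_eq_conjTranspose] using this
  have hD : Uᵀ * S * U = Matrix.diagonal d := by
    rw [hspec]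
    calc _ = (Uᵀ * U) * Matrix.diagonal d * (Uᵀ * U) := by simp only [Matrix.mul_assoc]
      _ = _ := by rw [hUU]; simp
  have hq : ∀ x : Fin n → ℝ, (U *ᵥ x) ⬝ᵥ S *ᵥ (U *ᵥ x) = ∑ i, d i * x i ^ 2 := by
    intro x
    rw [Matrix.dotProduct_mulVec, Matrix.vecMul_mulVec, ← Matrix.dotProduct_mulVec, Matrix.mulVec_mulVec, hD]
    simp only [Matrix.mulVec_diagonal, dotProduct]
    exact Finset.sum_congr rfl fun i _ => by ring
  have hn : ∀ x : Fin n → ℝ, (U *ᵥ x) ⬝ᵥ (U *ᵥ x) = ∑ i, x i ^ 2 := by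
    intro x
    rw [Matrix.dotProduct_mulVec, Matrix.vecMul_mulVec, hUU, Matrix.vecMul_one]
    simp only [dotProduct, sq]
  have hdle : ∀ i, d i ≤ 1/4 := by
    intro i
    have := hb (U *ᵥ Pi.single i 1)
    rw [hq, hn] at this
    simpa [Pi.single_apply] using this
  have htr : S.trace = ∑ i, d i := by
    rw [hspec, Matrix.trace_mul_comm, ← Matrix.mul_assoc, hUU]; simp
  have htr2 : (S*S).trace = ∑ i, d i ^ 2 := by
    have : S * S = U * (Matrix.diagonal d * Matrix.diagonal d) * Uᵀ := by
      calc S * S = U * Matrix.diagonal d * (Uᵀ * U) * Matrix.diagonal d * Uᵀ := by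
            conv_lhs => rw [hspec]
            simp only [Matrix.mul_assoc]
        _ = _ := by rw [hUU]; simp [Matrix.mul_assoc]
    rw [this, Matrix.trace_mul_comm, ← Matrix.mul_assoc, hUU]
    simp [Matrix.trace, sq]
  set k := Uᵀ *ᵥ h with hk
  have hh : h ⬝ᵥ h = ∑ i, k i ^ 2 := by
    have : k ⬝ᵥ k = h ⬝ᵥ h := by
      rw [hk, Matrix.dotProduct_mulVec, Matrix.vecMul_mulVec, Matrix.transpose_transpose, hUU', Matrix.vecMul_one]
    rw [← this]; simp only [dotProduct, sq]
  have hl : ∀ x, h ⬝ᵥ (U *ᵥ x) = ∑ i, k i * x i := by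
    intro x
    rw [Matrix.dotProduct_mulVec, hk, Matrix.mulVec_transpose]; rfl
  have hmeas : Measurable fun x : Fin n → ℝ => U *ᵥ x := by
    exact (Continuous.matrix_mulVec continuous_const continuous_id).measurable
  have hF : Measurable fun z : Fin n → ℝ => ENNReal.ofReal (Real.exp (z ⬝ᵥ S *ᵥ z + h ⬝ᵥ z)) := by
    apply Measurable.ennreal_ofReal
    apply Continuous.measurable
    have : Continuous fun z : Fin n → ℝ => S *ᵥ z := Continuous.matrix_mulVec continuous_const continuous_id
    fun_prop
  rw [← rot hS, lintegral_map hF hmeas]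
  simp only [hq, hl]
  simp only [← Finset.sum_add_distrib, Real.exp_sum]
  simp_rw [ENNReal.ofReal_prod_of_nonneg (fun i _ => (Real.exp_pos _).le)]
  rw [lintegral_prod_eq_prod_lintegral_of_indepFun Finset.univ
    (fun i (a : Fin n → ℝ) => ENNReal.ofReal (Real.exp (d i * a i ^ 2 + k i * a i)))
    (iIndepFun_pi (X := fun i a => ENNReal.ofReal (Real.exp (d i * a ^ 2 + k i * a)))
      (fun i => by fun_prop)) (fun i => by fun_prop)]
  rw [htr, htr2, hh, Finset.mul_sum, ← Finset.sum_add_distrib, ← Finset.sum_add_distrib, Real.exp_sum,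
    ENNReal.ofReal_prod_of_nonneg (fun i _ => (Real.exp_pos _).le)]
  apply Finset.prod_le_prod' 
  intro i _
  have := gauss1 (d i) (k i) (hdle i)
  refine le_trans (le_of_eq ?_) this
  have hmp := measurePreserving_eval (fun _ : Fin n => gaussianReal 0 1) i
  exact hmp.lintegral_comp (f := fun z => ENNReal.ofReal (Real.exp (d i * z ^ 2 + k i * z))) (by fun_prop)

lemma sqNorm_eq {n : ℕ} (v : Fin n → ℝ) : sqNorm v = v ⬝ᵥ v := by
  simp [sqNorm, dotProduct, sq]

lemma sqNorm_nonneg {n : ℕ} (v : Fin n → ℝ) : 0 ≤ sqNorm v :=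
  Finset.sum_nonneg fun i _ => sq_nonneg _

lemma two_dot_le {n : ℕ} (a b : Fin n → ℝ) (c : ℝ) (hc : 0 < c) :
    2 * (a ⬝ᵥ b) ≤ c * (a ⬝ᵥ a) + (b ⬝ᵥ b) / c := by
  simp only [dotProduct, Finset.mul_sum, Finset.sum_div, ← Finset.sum_add_distrib]
  apply Finset.sum_le_sum
  intro i _
  have : c * (a i * a i) + b i * b i / c - 2 * (a i * b i) = (c * a i - b i)^2 / c := by
    field_simp; ring
  have h2 : 0 ≤ (c * a i - b i)^2 / c := by positivity
  linarith

lemma markov_exp {n : ℕ} (μ : Measure (Fin n → ℝ)) (F : (Fin n → ℝ) → ℝ) (hF : Continuous F)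
    (a t : ℝ) (h : ∫⁻ z, ENNReal.ofReal (Real.exp (F z)) ∂μ ≤ ENNReal.ofReal (Real.exp a)) :
    μ {z | t + a < F z} ≤ ENNReal.ofReal (Real.exp (-t)) := by
  have h1 := mul_meas_ge_le_lintegral (μ := μ) (f := fun z => ENNReal.ofReal (Real.exp (F z)))
    (by fun_prop) (ENNReal.ofReal (Real.exp (t + a)))
  have h2 : μ {z | t + a < F z} ≤ μ {z | ENNReal.ofReal (Real.exp (t + a)) ≤ ENNReal.ofReal (Real.exp (F z))} := by
    apply measure_mono
    intro z hz
    apply ENNReal.ofReal_le_ofReal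
    exact Real.exp_le_exp.mpr (le_of_lt hz)
  have h3 : ENNReal.ofReal (Real.exp (t + a)) * μ {z | t + a < F z} ≤ ENNReal.ofReal (Real.exp a) :=
    le_trans (by gcongr) (h1.trans h)
  have h4 : ENNReal.ofReal (Real.exp (-t)) = ENNReal.ofReal (Real.exp a) / ENNReal.ofReal (Real.exp (t + a)) := by
    rw [← ENNReal.ofReal_div_of_pos (Real.exp_pos _), ← Real.exp_sub]; congr 2; ring
  rw [h4, ENNReal.le_div_iff_mul_le, mul_comm]
  · exact h3
  · left; simp [Real.exp_pos]
  · left; exact ENNReal.ofReal_ne_top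

lemma transpose_bound {n : ℕ} (B : Matrix (Fin n) (Fin n) ℝ)
    (hB : ∀ x, (B *ᵥ x) ⬝ᵥ (B *ᵥ x) ≤ 4 * (x ⬝ᵥ x)) (g : Fin n → ℝ) :
    (Bᵀ *ᵥ g) ⬝ᵥ (Bᵀ *ᵥ g) ≤ 4 * (g ⬝ᵥ g) := by
  have h1 : (Bᵀ *ᵥ g) ⬝ᵥ (Bᵀ *ᵥ g) = g ⬝ᵥ (B *ᵥ (Bᵀ *ᵥ g)) := by
    rw [Matrix.dotProduct_mulVec g, Matrix.mulVec_transpose]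
  have h2 := two_dot_le g (B *ᵥ (Bᵀ *ᵥ g)) 4 (by norm_num)
  have h3 := hB (Bᵀ *ᵥ g)
  linarith

lemma tail1 {n : ℕ} (B : Matrix (Fin n) (Fin n) ℝ)
    (hB : ∀ x, (B *ᵥ x) ⬝ᵥ (B *ᵥ x) ≤ 4 * (x ⬝ᵥ x)) (g : Fin n → ℝ) (t : ℝ) :
    stdG n {z | 36 * t < 2 * (z ⬝ᵥ (B *ᵥ z) - B.trace) + 2 * (z ⬝ᵥ g)
      - 1/2 * ((B *ᵥ z + g) ⬝ᵥ (B *ᵥ z + g))} ≤ ENNReal.ofReal (Real.exp (-t)) := by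
  set S : Matrix (Fin n) (Fin n) ℝ := (1/36 : ℝ) • (B + Bᵀ - (1/2 : ℝ) • (Bᵀ * B)) with hSdef
  set h : Fin n → ℝ := (1/36 : ℝ) • ((2:ℝ) • g - Bᵀ *ᵥ g) with hh
  have hS : S.IsHermitian := by
    rw [Matrix.IsHermitian, hSdef]
    simp [add_comm]
  have hzz : ∀ z : Fin n → ℝ, z ⬝ᵥ S *ᵥ z = 1/36 * (2 * (z ⬝ᵥ (B *ᵥ z)) - 1/2 * ((B *ᵥ z) ⬝ᵥ (B *ᵥ z))) := by
    intro z
    have e1 : z ⬝ᵥ (Bᵀ *ᵥ z) = z ⬝ᵥ (B *ᵥ z) := by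
      rw [Matrix.mulVec_transpose, dotProduct_comm, ← Matrix.dotProduct_mulVec]
    have e2 : z ⬝ᵥ ((Bᵀ * B) *ᵥ z) = (B *ᵥ z) ⬝ᵥ (B *ᵥ z) := by
      rw [← Matrix.mulVec_mulVec, Matrix.mulVec_transpose, dotProduct_comm, ← Matrix.dotProduct_mulVec]
    simp only [hSdef, Matrix.smul_mulVec, Matrix.sub_mulVec, Matrix.add_mulVec, dotProduct_smul,
      dotProduct_sub, dotProduct_add, e1, e2, smul_eq_mul]
    ring
  have hb : ∀ z : Fin n → ℝ, z ⬝ᵥ S *ᵥ z ≤ 1/4 * (z ⬝ᵥ z) := by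
    intro z
    rw [hzz]
    have h1 := two_dot_le z (B *ᵥ z) 2 (by norm_num)
    have h2 := hB z
    have h3 : 0 ≤ (B *ᵥ z) ⬝ᵥ (B *ᵥ z) := by rw [← sqNorm_eq]; exact sqNorm_nonneg _
    have h4 : 0 ≤ z ⬝ᵥ z := by rw [← sqNorm_eq]; exact sqNorm_nonneg _
    linarith
  have hlin : ∀ z, h ⬝ᵥ z = 1/36 * (2 * (z ⬝ᵥ g) - g ⬝ᵥ (B *ᵥ z)) := by
    intro z
    rw [hh, smul_dotProduct, sub_dotProduct, smul_dotProduct, Matrix.mulVec_transpose,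
      ← Matrix.dotProduct_mulVec, dotProduct_comm g z]
    simp
  set F := (Bᵀ * B).trace with hFdef
  have hF0 : F = ∑ j, (B.col j) ⬝ᵥ (B.col j) := by
    simp [hFdef, Matrix.trace, Matrix.mul_apply, dotProduct]
  have hF1 : F = ∑ i, ∑ j, B i j ^ 2 := by
    rw [hF0, Finset.sum_comm]; simp [dotProduct, sq]
  have htr : S.trace = 1/36 * (2 * B.trace - 1/2 * F) := by
    simp [hSdef, Matrix.trace_add, Matrix.trace_sub, Matrix.trace_smul, ← hFdef]; ring
  have hG : ∑ i, ∑ j, (Bᵀ * B) i j ^ 2 ≤ 4 * F := by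
    rw [Finset.sum_comm, hF0, Finset.mul_sum]
    apply Finset.sum_le_sum
    intro j _
    have := transpose_bound B hB (B.col j)
    refine le_trans (le_of_eq ?_) this
    simp [dotProduct, Matrix.mulVec, Matrix.mul_apply, sq]
  have htr2 : (S * S).trace ≤ (1/36)^2 * (9 * F) := by
    have e0 : (S * S).trace = ∑ i, ∑ j, S i j ^ 2 := by
      simp only [Matrix.trace, Matrix.diag, Matrix.mul_apply]
      refine Finset.sum_congr rfl fun i _ => Finset.sum_congr rfl fun j _ => ?_
      have := hS.apply i j
      simp at this
      rw [this]; ring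
    rw [e0]
    have e1 : ∑ i, ∑ j, S i j ^ 2 ≤ ∑ i, ∑ j, (1/36)^2 * (3 * (B i j ^2 + B j i ^2 + 1/4 * (Bᵀ * B) i j ^ 2)) := by
      refine Finset.sum_le_sum fun i _ => Finset.sum_le_sum fun j _ => ?_
      have : S i j = 1/36 * (B i j + B j i - 1/2 * (Bᵀ * B) i j) := by
        simp [hSdef]
      rw [this]
      nlinarith [sq_nonneg (B i j - B j i), sq_nonneg (B i j + 1/2 * (Bᵀ * B) i j), sq_nonneg (B j i + 1/2 * (Bᵀ * B) i j)]
    refine e1.trans ?_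
    simp only [← Finset.mul_sum, Finset.sum_add_distrib]
    have e2 : ∑ i, ∑ j, B j i ^ 2 = F := by rw [hF1, Finset.sum_comm]
    rw [e2, ← hF1]
    linarith
  have hhh : h ⬝ᵥ h ≤ (1/36)^2 * (16 * (g ⬝ᵥ g)) := by
    have e1 := transpose_bound B hB g
    have e2 := two_dot_le g (-(Bᵀ *ᵥ g)) 2 (by norm_num)
    simp only [dotProduct_neg, neg_dotProduct, neg_neg] at e2
    have e3 : h ⬝ᵥ h = (1/36)^2 * (4 * (g ⬝ᵥ g) - 4 * (g ⬝ᵥ (Bᵀ *ᵥ g)) + (Bᵀ *ᵥ g) ⬝ᵥ (Bᵀ *ᵥ g)) := by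
      simp only [hh, smul_dotProduct, dotProduct_smul, sub_dotProduct, dotProduct_sub, smul_eq_mul,
        dotProduct_comm (Bᵀ *ᵥ g) g]
      ring
    rw [e3]
    linarith
  have hFn : 0 ≤ F := by rw [hF1]; positivity
  have hgn : 0 ≤ g ⬝ᵥ g := by rw [← sqNorm_eq]; exact sqNorm_nonneg _
  have hmain := gaussQuad S hS h hb
  have := markov_exp (stdG n) (fun z => z ⬝ᵥ S *ᵥ z + h ⬝ᵥ z) (by
    have : Continuous fun z : Fin n → ℝ => S *ᵥ z := Continuous.matrix_mulVec continuous_const continuous_id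
    fun_prop) _ t hmain
  refine le_trans (measure_mono ?_) this
  intro z hz
  simp only [Set.mem_ofPred_eq] at hz ⊢
  rw [hzz, hlin z]
  have e : (B *ᵥ z + g) ⬝ᵥ (B *ᵥ z + g) = (B *ᵥ z) ⬝ᵥ (B *ᵥ z) + 2 * (g ⬝ᵥ (B *ᵥ z)) + g ⬝ᵥ g := by
    simp only [add_dotProduct, dotProduct_add, dotProduct_comm (B *ᵥ z) g]; ring
  rw [e] at hz
  rw [htr]
  linarith

lemma tail2 {n : ℕ} (t : ℝ) :
    stdG n {z | 4 * t + 2 * n < z ⬝ᵥ z} ≤ ENNReal.ofReal (Real.exp (-t)) := by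
  have hmain := gaussQuad ((1/4 : ℝ) • (1 : Matrix (Fin n) (Fin n) ℝ)) (by simp [Matrix.IsHermitian]) 0
    (by intro z; simp [Matrix.smul_mulVec])
  have := markov_exp (stdG n) (fun z => z ⬝ᵥ ((1/4 : ℝ) • (1 : Matrix (Fin n) (Fin n) ℝ)) *ᵥ z + 0 ⬝ᵥ z)
    (by simp only [Matrix.smul_mulVec, Matrix.one_mulVec]; fun_prop) _ t hmain
  refine le_trans (measure_mono ?_) this
  intro z hz
  simp [Matrix.smul_mulVec, Matrix.trace_smul] at hz ⊢
  have : (0:ℝ) ≤ n := by positivity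
  linarith

lemma gaussPi_eq (n : ℕ) (σ : ℝ) : gaussPi n σ = (stdG n).map (fun z => σ • z) := by
  have h := Measure.pi_map_pi (μ := fun _ : Fin n => gaussianReal 0 1) (f := fun _ x => σ * x)
    (fun i => by fun_prop)
  have e : (fun z : Fin n → ℝ => σ • z) = fun x i => σ * x i := by ext; simp
  rw [e, h, gaussPi]
  congr 1
  ext1 i
  rw [gaussianReal_map_const_mul]
  simp
  rfl

lemma opn {n : ℕ} (A : Matrix (Fin n) (Fin n) ℝ) (hA : opNorm A ≤ 1) (x : Fin n → ℝ) :
    sqNorm (A *ᵥ x) ≤ sqNorm x := by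
  have hCS : ∀ x : Fin n → ℝ, sqNorm (A *ᵥ x) ≤ (∑ i, ∑ j, A i j ^ 2) * sqNorm x := by
    intro x
    simp only [sqNorm, Matrix.mulVec, dotProduct]
    rw [Finset.sum_mul]
    exact Finset.sum_le_sum fun i _ => Finset.sum_mul_sq_le_sq_mul_sq _ _ _
  have hK : 0 ≤ ∑ i, ∑ j, A i j ^ 2 := by positivity
  have hbdd : BddAbove {c | ∃ x : Fin n → ℝ, sqNorm x ≤ 1 ∧ c = Real.sqrt (sqNorm (A.mulVec x))} := by
    refine ⟨Real.sqrt (∑ i, ∑ j, A i j ^ 2), ?_⟩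
    rintro c ⟨x, hx, rfl⟩
    apply Real.sqrt_le_sqrt
    exact (hCS x).trans (by nlinarith)
  have hunit : ∀ x : Fin n → ℝ, sqNorm x ≤ 1 → sqNorm (A *ᵥ x) ≤ 1 := by
    intro x hx
    have h1 : Real.sqrt (sqNorm (A *ᵥ x)) ≤ 1 := (le_csSup hbdd ⟨x, hx, rfl⟩).trans hA
    rwa [Real.sqrt_le_one] at h1
  have hsm : ∀ (c : ℝ) (v : Fin n → ℝ), sqNorm (c • v) = c^2 * sqNorm v := by
    intro c v; simp [sqNorm, mul_pow, Finset.mul_sum]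
  rcases (sqNorm_nonneg x).eq_or_lt with h0 | hpos
  · have := hCS x
    rw [← h0] at this ⊢; simpa using this
  · have h1 := hunit ((Real.sqrt (sqNorm x))⁻¹ • x) (by
      rw [hsm, inv_pow, Real.sq_sqrt hpos.le, inv_mul_cancel₀ hpos.ne'])
    rw [Matrix.mulVec_smul, hsm, inv_pow, Real.sq_sqrt hpos.le, inv_mul_le_iff₀ hpos, mul_one] at h1
    exact h1

lemma maurey {n M : ℕ} (d : Fin M → Fin n → ℝ) (θ : Fin M → ℝ) (hθ : θ ∈ simplex M)
    (h0 : ∑ j, θ j • d j = 0) (m : ℕ) (w : Fin n → ℝ) :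
    ∃ u : Fin m → Fin M, 2 * (w ⬝ᵥ ∑ q, d (u q)) + (∑ q, d (u q)) ⬝ᵥ (∑ q, d (u q))
      ≤ m * ∑ j, θ j * (d j ⬝ᵥ d j) := by
  induction m with
  | zero => exact ⟨Fin.elim0, by simp⟩
  | succ m ih =>
    obtain ⟨u, hu⟩ := ih
    set s := ∑ q, d (u q) with hs
    set V := ∑ j, θ j * (d j ⬝ᵥ d j) with hV
    have hex : ∃ j, 2 * ((w + s) ⬝ᵥ d j) + d j ⬝ᵥ d j ≤ V := by
      by_contra hcon
      push Not at hcon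
      have hsum : ∑ j, θ j * (2 * ((w + s) ⬝ᵥ d j) + d j ⬝ᵥ d j) = V := by
        have e : ∑ j, θ j * ((w + s) ⬝ᵥ d j) = 0 := by
          have := congrArg (fun v => (w + s) ⬝ᵥ v) h0
          simpa [dotProduct_sum] using this
        calc _ = 2 * ∑ j, θ j * ((w + s) ⬝ᵥ d j) + V := by
              rw [hV, Finset.mul_sum, ← Finset.sum_add_distrib]
              exact Finset.sum_congr rfl fun j _ => by ring
          _ = V := by rw [e]; ring
      have hV2 : ∑ j, θ j * V = V := by rw [← Finset.sum_mul, hθ.2, one_mul]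
      obtain ⟨j0, hj0⟩ : ∃ j, 0 < θ j := by
        by_contra hc
        push Not at hc
        have : ∑ j, θ j ≤ 0 := Finset.sum_nonpos fun j _ => hc j
        rw [hθ.2] at this; linarith
      have : ∑ j, θ j * V < ∑ j, θ j * (2 * ((w + s) ⬝ᵥ d j) + d j ⬝ᵥ d j) :=
        Finset.sum_lt_sum (fun j _ => mul_le_mul_of_nonneg_left (hcon j).le (hθ.1 j))
          ⟨j0, Finset.mem_univ _, mul_lt_mul_of_pos_left (hcon j0) hj0⟩
      linarith
    obtain ⟨j, hj⟩ := hex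
    refine ⟨Fin.snoc (α := fun _ => Fin M) u j, ?_⟩
    rw [Fin.sum_univ_castSucc]
    simp only [Fin.snoc_castSucc, Fin.snoc_last, ← hs]
    simp only [add_dotProduct, dotProduct_add] at hj ⊢
    rw [dotProduct_comm (d j) s]
    push_cast
    linarith

lemma oracle {ι : Type*} [Fintype ι] [DecidableEq ι] {n : ℕ} (ν : ι → Fin n → ℝ) (T : ι → ℝ) (τ : ℝ)
    (f ξ : Fin n → ℝ) (H : (ι → ℝ) → ℝ)
    (hH : ∀ lam, H lam = sqNorm (∑ u, lam u • ν u) - 2 * ∑ i, (f + ξ) i * (∑ u, lam u • ν u) i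
      + 2 * τ * ∑ u, lam u * T u + (1/2) * ∑ u, lam u * sqNorm ((∑ u, lam u • ν u) - ν u))
    (l : ι → ℝ) (hl : (∀ u, 0 ≤ l u) ∧ ∑ u, l u = 1)
    (hmin : ∀ lam : ι → ℝ, ((∀ u, 0 ≤ lam u) ∧ ∑ u, lam u = 1) → H l ≤ H lam) (k : ι) :
    sqNorm ((∑ u, l u • ν u) - f) ≤ sqNorm (ν k - f) +
      ∑ u, l u * (2 * (ξ ⬝ᵥ (ν u - ν k)) - 2 * τ * (T u - T k) - 1/2 * sqNorm (ν u - ν k)) := by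
  have hH2 : ∀ lam : ι → ℝ, ∑ u, lam u = 1 → H lam = 1/2 * ((∑ u, lam u • ν u) ⬝ᵥ (∑ u, lam u • ν u))
      - 2 * ((f + ξ) ⬝ᵥ (∑ u, lam u • ν u)) + 2 * τ * ∑ u, lam u * T u
      + 1/2 * ∑ u, lam u * (ν u ⬝ᵥ ν u) := by
    intro lam hlam
    rw [hH]
    set N := ∑ u, lam u • ν u with hN
    have e : ∑ u, lam u * sqNorm (N - ν u) = ∑ u, lam u * (ν u ⬝ᵥ ν u) - N ⬝ᵥ N := by
      have e1 : ∑ u, lam u * (N ⬝ᵥ ν u) = N ⬝ᵥ N := by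
        have h := dotProduct_sum N Finset.univ (fun u => lam u • ν u)
        rw [← hN] at h
        rw [h]; simp
      calc _ = ∑ u, (lam u * (N ⬝ᵥ N) - 2 * (lam u * (N ⬝ᵥ ν u)) + lam u * (ν u ⬝ᵥ ν u)) := by
            refine Finset.sum_congr rfl fun u _ => ?_
            rw [sqNorm_eq]
            simp only [sub_dotProduct, dotProduct_sub, dotProduct_comm (ν u) N]; ring
        _ = _ := by
            rw [Finset.sum_add_distrib, Finset.sum_sub_distrib, ← Finset.sum_mul, ← Finset.mul_sum, e1, hlam]
            ring
    rw [e, sqNorm_eq]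
    change _ - 2 * ((f + ξ) ⬝ᵥ N) + _ + _ = _
    ring
  set N := ∑ u, l u • ν u with hN
  set p := ∑ u, l u * (ν u ⬝ᵥ ν u) with hp
  set Th := ∑ u, l u * T u with hTh
  set a := ν k with ha
  set D := N ⬝ᵥ a - N ⬝ᵥ N - 2 * ((f + ξ) ⬝ᵥ a) + 2 * ((f + ξ) ⬝ᵥ N) + 2 * τ * (T k - Th)
    + 1/2 * (a ⬝ᵥ a - p) with hD
  have hstep : ∀ t : ℝ, 0 < t → t ≤ 1 → 0 ≤ D + t * (1/2 * ((a - N) ⬝ᵥ (a - N))) := by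
    intro t ht ht1
    let lt : ι → ℝ := fun u => (1 - t) * l u + t * (if u = k then 1 else 0)
    have hs1 : ∑ u, lt u = 1 := by
      simp only [lt, Finset.sum_add_distrib, ← Finset.mul_sum, hl.2]; simp
    have hle := hmin lt ⟨fun u => by
      have := hl.1 u
      have : 0 ≤ 1 - t := by linarith
      simp only [lt]; split_ifs <;> positivity, hs1⟩
    rw [hH2 l hl.2, hH2 lt hs1] at hle
    have e1 : ∑ u, lt u • ν u = N + t • (a - N) := by
      simp only [lt, add_smul, Finset.sum_add_distrib, mul_smul, ← Finset.smul_sum, ← hN]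
      simp [← ha]; module
    have e2 : ∀ g : ι → ℝ, ∑ u, lt u * g u = ∑ u, l u * g u + t * (g k - ∑ u, l u * g u) := by
      intro g
      simp only [lt, add_mul, Finset.sum_add_distrib, mul_assoc, ← Finset.mul_sum]
      simp; ring
    rw [e1, e2, e2, ← hN, ← hp, ← hTh, ← ha] at hle
    simp only [add_dotProduct, dotProduct_add, smul_dotProduct, dotProduct_smul, sub_dotProduct,
      dotProduct_sub, smul_eq_mul, dotProduct_comm a N] at hle hD ⊢
    have : 0 ≤ t * (D + t * (1/2 * (a ⬝ᵥ a - N ⬝ᵥ a - (N ⬝ᵥ a - N ⬝ᵥ N)))) := by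
      rw [hD]; linarith
    exact nonneg_of_mul_nonneg_right this ht
  have hD0 : 0 ≤ D := by
    by_contra hc
    push Not at hc
    set Z := 1/2 * ((a - N) ⬝ᵥ (a - N)) with hZ
    have hZ0 : 0 ≤ Z := by rw [hZ, ← sqNorm_eq]; have := sqNorm_nonneg (a - N); positivity
    have h1 := hstep (min 1 (-D / (2 * (Z + 1)))) (lt_min one_pos (div_pos (by linarith) (by positivity)))
      (min_le_left _ _)
    have h2 : min 1 (-D / (2 * (Z + 1))) * Z ≤ -D / (2 * (Z + 1)) * Z :=
      mul_le_mul_of_nonneg_right (min_le_right _ _) hZ0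
    have h3 : -D / (2 * (Z + 1)) * Z ≤ -D / 2 := by
      rw [div_mul_eq_mul_div, div_le_div_iff₀ (by positivity) (by norm_num)]
      nlinarith
    linarith
  have hsum : ∑ u, l u * (2 * (ξ ⬝ᵥ (ν u - a)) - 2 * τ * (T u - T k) - 1/2 * sqNorm (ν u - a))
      = 2 * (ξ ⬝ᵥ N) - 2 * (ξ ⬝ᵥ a) - 2 * τ * (Th - T k) - 1/2 * (p - 2 * (N ⬝ᵥ a) + a ⬝ᵥ a) := by
    have e1 : ∑ u, l u * (ξ ⬝ᵥ ν u) = ξ ⬝ᵥ N := by rw [hN, dotProduct_sum]; simp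
    have e2 : ∑ u, l u * (a ⬝ᵥ ν u) = N ⬝ᵥ a := by rw [dotProduct_comm, hN, dotProduct_sum]; simp
    calc _ = ∑ u, (2 * (l u * (ξ ⬝ᵥ ν u)) - l u * (2 * (ξ ⬝ᵥ a)) - 2 * τ * (l u * T u) + l u * (2 * τ * T k)
          - 1/2 * (l u * (ν u ⬝ᵥ ν u)) + l u * (a ⬝ᵥ ν u) - l u * (1/2 * (a ⬝ᵥ a))) := by
          refine Finset.sum_congr rfl fun u _ => ?_
          rw [sqNorm_eq]
          simp only [sub_dotProduct, dotProduct_sub, dotProduct_comm (ν u) a]; ring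
      _ = _ := by
          simp only [Finset.sum_add_distrib, Finset.sum_sub_distrib, ← Finset.sum_mul, ← Finset.mul_sum,
            e1, e2, hl.2, ← hp, ← hTh]
          ring
  rw [hsum, sqNorm_eq, sqNorm_eq]
  simp only [add_dotProduct, sub_dotProduct, dotProduct_sub, dotProduct_comm a f, dotProduct_comm N f] at hD ⊢
  linarith

lemma grid_card (M m : ℕ) :
    (Finset.univ.image (gridPoint M m)).card ≤ (M + m).choose m := by
  classical
  have hsub : Finset.univ.image (gridPoint M m) ⊆
      (Finset.univ : Finset (Sym (Fin M) m)).image (fun s j => ((s.1.count j : ℕ) : ℝ) / m) := by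
    intro p hp
    simp only [Finset.mem_image, Finset.mem_univ, true_and] at hp ⊢
    obtain ⟨u, rfl⟩ := hp
    refine ⟨⟨Finset.univ.val.map u, by simp⟩, ?_⟩
    ext j
    simp only [gridPoint]
    congr 1
    rw [Multiset.count_map]
    simp only [Finset.sum_boole]
    norm_cast
    rw [Finset.card_def, Finset.filter_val]
    simp only [eq_comm]
  calc _ ≤ _ := Finset.card_le_card hsub
    _ ≤ _ := Finset.card_image_le
    _ = (M + m - 1).choose m := by rw [Finset.card_univ, Sym.card_sym_eq_choose]; simp
    _ ≤ _ := Nat.choose_le_choose _ (by omega)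

lemma log_choose (M m : ℕ) (hM : 1 ≤ M) (hm : 1 ≤ m) :
    Real.log ((M + m).choose m : ℝ) ≤ m * Real.log (1 + M / m) + M * Real.log (1 + m / M) := by
  have hM' : (0:ℝ) < M := by exact_mod_cast hM
  have hm' : (0:ℝ) < m := by exact_mod_cast hm
  have h1 : (m:ℝ)^m * (M:ℝ)^M * ((M + m).choose m : ℝ) ≤ ((m:ℝ) + M)^(m + M) := by
    rw [add_pow]
    have := Finset.single_le_sum (s := Finset.range (m + M + 1))
      (f := fun k => (m:ℝ)^k * (M:ℝ)^(m + M - k) * ((m + M).choose k : ℝ))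
      (fun i _ => by positivity) (Finset.mem_range.mpr (show m < m + M + 1 by omega))
    simpa [add_comm M m] using this
  have hc : (0:ℝ) < ((M + m).choose m : ℝ) := by exact_mod_cast Nat.choose_pos (by omega)
  have h2 := Real.log_le_log (by positivity) h1
  rw [Real.log_mul (by positivity) (by positivity), Real.log_mul (by positivity) (by positivity),
    Real.log_pow, Real.log_pow, Real.log_pow] at h2
  have e1 : (1 + (M:ℝ) / m) = (m + M) / m := by field_simp
  have e2 : (1 + (m:ℝ) / M) = (m + M) / M := by field_simp; ring
  rw [e1, e2, Real.log_div (by positivity) (by positivity), Real.log_div (by positivity) (by positivity)]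
  push_cast at h2
  linarith

lemma numeric (M m s L : ℝ) (hM : 0 < M) (hm : 0 < m) (hs : 0 < s) (hL : L = Real.log (1 + M / s))
    (hms : m ≤ s / Real.sqrt L) :
    m * Real.log (1 + M / m) + M * Real.log (1 + m / M) ≤ 6 * (s * Real.sqrt L) := by
  have hr : 0 < M / s := by positivity
  have hL0 : 0 < L := by rw [hL]; exact Real.log_pos (by linarith)
  have hLr : L ≤ M / s := by
    rw [hL]; have := Real.log_le_sub_one_of_pos (show 0 < 1 + M/s by positivity); linarith
  set q := Real.sqrt L with hq
  have hq0 : 0 < q := Real.sqrt_pos.mpr hL0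
  have hqq : q^2 = L := Real.sq_sqrt hL0.le
  have hmq : m * q ≤ s := by rwa [le_div_iff₀ hq0] at hms
  have p1 : m * Real.log (1 + M / m) ≤ 2 * (s * q) := by
    set m' := s / q with hm'
    have hm'0 : 0 < m' := by positivity
    have h1 : 1 + (m' / m) * (M / m') ≤ (1 + M / m') ^ (m' / m) :=
      one_add_mul_self_le_rpow_one_add (by have : 0 < M / m' := by positivity
                                           linarith) (by rwa [le_div_iff₀ hm, one_mul])
    have e1 : (m' / m) * (M / m') = M / m := by field_simp
    rw [e1] at h1
    have h2 := Real.log_le_log (by positivity) h1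
    rw [Real.log_rpow (by positivity)] at h2
    have h3 : 1 + M / m' ≤ (1 + M / s)^2 := by
      have : M / m' = (M / s) * q := by rw [hm']; field_simp
      rw [this]
      nlinarith [sq_nonneg (q - 1)]
    have h4 := Real.log_le_log (by positivity) h3
    rw [Real.log_pow, ← hL] at h4
    push_cast at h4
    calc m * Real.log (1 + M / m) ≤ m * (m' / m * Real.log (1 + M / m')) := by gcongr
      _ = m' * Real.log (1 + M / m') := by field_simp
      _ ≤ m' * (2 * L) := by gcongr
      _ = 2 * (s * q) := by rw [hm', ← hqq]; field_simp
  have p2 : M * Real.log (1 + m / M) ≤ 4 * (s * q) := by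
    set t := s / M with ht
    have ht0 : 0 < t := by positivity
    set w := Real.sqrt (1 + t) with hw
    have hw0 : 0 < w := Real.sqrt_pos.mpr (by positivity)
    have hww : w^2 = 1 + t := Real.sq_sqrt (by positivity)
    have hw1 : 1 ≤ w := by nlinarith
    have hLt : 1 / (1 + t) ≤ L := by
      have := Real.one_sub_inv_le_log_of_pos (show 0 < 1 + M/s by positivity)
      rw [← hL] at this
      refine le_trans (le_of_eq ?_) this
      rw [ht]; field_simp; ring
    have hqw : 1 ≤ q * w := by
      have : 1 ≤ (q * w)^2 := by
        rw [mul_pow, hqq, hww]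
        rwa [div_le_iff₀ (by positivity)] at hLt
      nlinarith [mul_pos hq0 hw0]
    have h3 : 1 + m / M ≤ (1 + t)^2 := by
      have : m / M ≤ t * w := by
        rw [ht, div_mul_eq_mul_div]
        gcongr
        nlinarith
      have : t * w ≤ t * (2 + t) := by
        gcongr
        nlinarith
      nlinarith
    have h4 := Real.log_le_log (by positivity) h3
    rw [Real.log_pow] at h4
    push_cast at h4
    have h5 : Real.log (1 + t) ≤ 2 * (w - 1) := by
      rw [← hww, Real.log_pow]
      have := Real.log_le_sub_one_of_pos hw0
      push_cast; linarith
    have h6 : w - 1 ≤ t * q := by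
      have a1 : t = (w - 1) * (w + 1) := by nlinarith
      have a2 : t * q = (w - 1) * (q * w + q) := by rw [a1]; ring
      rw [a2]
      nlinarith [mul_nonneg (sub_nonneg.mpr hw1) hq0.le]
    calc M * Real.log (1 + m / M) ≤ M * (4 * (t * q)) := by gcongr; linarith
      _ = 4 * (s * q) := by rw [ht]; field_simp
  linarith

lemma var_id {n M : ℕ} (v : Fin M → Fin n → ℝ) (θ : Fin M → ℝ) (hθ : ∑ j, θ j = 1) :
    ∑ j, θ j * sqNorm (v j - ∑ i, θ i • v i) = ∑ j, θ j * sqNorm (v j) - sqNorm (∑ i, θ i • v i) := by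
  set N := ∑ i, θ i • v i with hN
  have e1 : ∑ u, θ u * (N ⬝ᵥ v u) = N ⬝ᵥ N := by
    have h := dotProduct_sum N Finset.univ (fun u => θ u • v u)
    rw [← hN] at h
    rw [h]; simp
  calc _ = ∑ u, (θ u * (N ⬝ᵥ N) - 2 * (θ u * (N ⬝ᵥ v u)) + θ u * sqNorm (v u)) := by
        refine Finset.sum_congr rfl fun u _ => ?_
        rw [sqNorm_eq, sqNorm_eq]
        simp only [sub_dotProduct, dotProduct_sub, dotProduct_comm (v u) N]; ring
    _ = _ := by
        rw [Finset.sum_add_distrib, Finset.sum_sub_distrib, ← Finset.sum_mul, ← Finset.mul_sum, e1, hθ,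
          sqNorm_eq N]
        ring

lemma jensen {n M : ℕ} (v : Fin M → Fin n → ℝ) (θ : Fin M → ℝ) (hθ : θ ∈ simplex M) (W : ℝ)
    (hW : ∀ j, sqNorm (v j) ≤ W) : sqNorm (∑ i, θ i • v i) ≤ W := by
  have h := var_id v θ hθ.2
  have h1 : 0 ≤ ∑ j, θ j * sqNorm (v j - ∑ i, θ i • v i) :=
    Finset.sum_nonneg fun j _ => mul_nonneg (hθ.1 j) (sqNorm_nonneg _)
  have h2 : ∑ j, θ j * sqNorm (v j) ≤ ∑ j, θ j * W :=
    Finset.sum_le_sum fun j _ => mul_le_mul_of_nonneg_left (hW j) (hθ.1 j)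
  rw [← Finset.sum_mul, hθ.2] at h2
  linarith

lemma var_le {n M : ℕ} (v : Fin M → Fin n → ℝ) (θ : Fin M → ℝ) (hθ : θ ∈ simplex M) (W : ℝ)
    (hW : ∀ j, sqNorm (v j) ≤ W) : ∑ j, θ j * sqNorm (v j - ∑ i, θ i • v i) ≤ W := by
  have h := var_id v θ hθ.2
  have h1 := sqNorm_nonneg (∑ i, θ i • v i)
  have h2 : ∑ j, θ j * sqNorm (v j) ≤ ∑ j, θ j * W :=
    Finset.sum_le_sum fun j _ => mul_le_mul_of_nonneg_left (hW j) (hθ.1 j)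
  rw [← Finset.sum_mul, hθ.2] at h2
  linarith

lemma grid_simplex (M m : ℕ) (hm : 1 ≤ m) (u : Fin m → Fin M) : gridPoint M m u ∈ simplex M := by
  have hm' : (m:ℝ) ≠ 0 := by positivity
  constructor
  · intro j
    simp only [gridPoint]
    positivity
  · simp only [gridPoint]
    rw [← Finset.sum_div, Finset.sum_comm]
    simp [hm']

lemma muV_grid {n M m : ℕ} (A : Fin M → Matrix (Fin n) (Fin n) ℝ) (b : Fin M → Fin n → ℝ)
    (y : Fin n → ℝ) (u : Fin m → Fin M) :
    muV A b y (gridPoint M m u) = (1 / m : ℝ) • ∑ q, ((A (u q)).mulVec y + b (u q)) := by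
  simp only [muV, gridPoint, div_eq_inv_mul, mul_smul, ← Finset.smul_sum, Finset.sum_smul, mul_one]
  congr 1
  rw [Finset.sum_comm]
  simp [ite_smul, Finset.sum_add_distrib]

lemma det {n M m : ℕ} (A : Fin M → Matrix (Fin n) (Fin n) ℝ) (b : Fin M → Fin n → ℝ) (σ : ℝ)
    (f ξ : Fin n → ℝ) (l : (Fin m → Fin M) → ℝ) (hl : l ∈ simplexGrid M m)
    (hmin : ∀ lam ∈ simplexGrid M m, HpenGrid A b σ (f + ξ) l ≤ HpenGrid A b σ (f + ξ) lam)
    (hm : 1 ≤ m) (K W : ℝ)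
    (hpair : ∀ u k : Fin m → Fin M,
      2 * (ξ ⬝ᵥ (muV A b (f + ξ) (gridPoint M m u) - muV A b (f + ξ) (gridPoint M m k)))
       - 2 * σ^2 * (∑ j, gridPoint M m u j * (A j).trace - ∑ j, gridPoint M m k j * (A j).trace)
       - 1/2 * sqNorm (muV A b (f + ξ) (gridPoint M m u) - muV A b (f + ξ) (gridPoint M m k)) ≤ K)
    (hW : ∀ j, sqNorm ((A j).mulVec (f + ξ) + b j) ≤ W)
    (θ : Fin M → ℝ) (hθ : θ ∈ simplex M) :
    sqNorm (nuGrid A b (f + ξ) l - f) ≤ sqNorm (muV A b (f + ξ) θ - f) + W / m + K := by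
  have hm' : (0:ℝ) < m := by exact_mod_cast hm
  set y := f + ξ with hy
  set v : Fin M → Fin n → ℝ := fun j => (A j).mulVec y + b j with hv
  set N := muV A b y θ with hN
  have hN' : ∑ i, θ i • v i = N := rfl
  have h0 : ∑ j, θ j • (v j - N) = 0 := by
    simp only [smul_sub, Finset.sum_sub_distrib, ← Finset.sum_smul, hθ.2, one_smul, hN', sub_self]
  obtain ⟨k, hk⟩ := maurey (fun j => v j - N) θ hθ h0 m ((m:ℝ) • (N - f))
  have hVle := var_le v θ hθ W hW
  rw [hN'] at hVle
  simp only [sqNorm_eq] at hVle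
  set s := ∑ q, (v (k q) - N) with hs
  have hgrid : muV A b y (gridPoint M m k) - f = (N - f) + (1/m : ℝ) • s := by
    rw [muV_grid, hs, Finset.sum_sub_distrib]
    simp only [Finset.sum_const, Finset.card_univ, Fintype.card_fin, smul_sub]
    rw [← Nat.cast_smul_eq_nsmul ℝ m N, smul_smul, one_div, inv_mul_cancel₀ hm'.ne', one_smul]
    abel
  have hM : sqNorm (muV A b y (gridPoint M m k) - f) ≤ sqNorm (N - f) + W / m := by
    rw [hgrid, sqNorm_eq, sqNorm_eq]
    rw [smul_dotProduct] at hk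
    have e : (N - f + (1 / m : ℝ) • s) ⬝ᵥ (N - f + (1 / m : ℝ) • s)
        = (N - f) ⬝ᵥ (N - f) + (1/m)^2 * (2 * (m * ((N - f) ⬝ᵥ s)) + s ⬝ᵥ s) := by
      generalize N - f = a
      simp only [add_dotProduct, dotProduct_add, smul_dotProduct, dotProduct_smul, smul_eq_mul,
        dotProduct_comm s a]
      field_simp; ring
    rw [e]
    have : (1/m : ℝ)^2 * (2 * (m * ((N - f) ⬝ᵥ s)) + s ⬝ᵥ s) ≤ (1/m)^2 * (m * W) := by
      apply mul_le_mul_of_nonneg_left _ (by positivity)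
      refine hk.trans ?_
      gcongr
    have e2 : (1/m : ℝ)^2 * (m * W) = W / m := by field_simp
    linarith
  have hor := oracle (fun u => muV A b y (gridPoint M m u)) (fun u => ∑ j, gridPoint M m u j * (A j).trace)
    (σ^2) f ξ (HpenGrid A b σ y) (fun lam => by rw [HpenGrid]; rfl) l hl hmin k
  have hsum : ∑ u, l u * (2 * (ξ ⬝ᵥ (muV A b y (gridPoint M m u) - muV A b y (gridPoint M m k)))
       - 2 * σ^2 * (∑ j, gridPoint M m u j * (A j).trace - ∑ j, gridPoint M m k j * (A j).trace)
       - 1/2 * sqNorm (muV A b y (gridPoint M m u) - muV A b y (gridPoint M m k))) ≤ ∑ u, l u * K :=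
    Finset.sum_le_sum fun u _ => mul_le_mul_of_nonneg_left (hpair u k) (hl.1 u)
  rw [← Finset.sum_mul, hl.2, one_mul] at hsum
  have : sqNorm (nuGrid A b y l - f) ≤ _ := hor
  linarith

lemma pairTail {n : ℕ} (B : Matrix (Fin n) (Fin n) ℝ)
    (hB : ∀ x, (B *ᵥ x) ⬝ᵥ (B *ᵥ x) ≤ 4 * (x ⬝ᵥ x)) (g : Fin n → ℝ) (σ t : ℝ) :
    gaussPi n σ {ξ | 36 * σ^2 * t < 2 * (ξ ⬝ᵥ (B *ᵥ ξ + g)) - 2 * σ^2 * B.trace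
      - 1/2 * sqNorm (B *ᵥ ξ + g)} ≤ ENNReal.ofReal (Real.exp (-t)) := by
  have hc : Continuous fun z : Fin n → ℝ => B *ᵥ z := Continuous.matrix_mulVec continuous_const continuous_id
  rw [gaussPi_eq, Measure.map_apply (by fun_prop)]
  swap
  · simp only [sqNorm_eq]
    exact (isOpen_lt (by fun_prop) (by fun_prop)).measurableSet
  by_cases hσ : σ = 0
  · refine le_trans (le_of_eq ?_) zero_le
    convert measure_empty (μ := stdG n)
    ext z
    have := sqNorm_nonneg g
    simp [hσ]
    linarith
  · refine le_trans (measure_mono ?_) (tail1 B hB (σ⁻¹ • g) t)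
    intro z hz
    have hz' : 36 * σ^2 * t < 2 * ((σ • z) ⬝ᵥ (B *ᵥ (σ • z) + g)) - 2 * σ^2 * B.trace
      - 1/2 * sqNorm (B *ᵥ (σ • z) + g) := hz
    show 36 * t < _
    set g' := σ⁻¹ • g with hg'
    have hg : g = σ • g' := by rw [hg', smul_smul, mul_inv_cancel₀ hσ, one_smul]
    rw [hg, Matrix.mulVec_smul, ← smul_add, sqNorm_eq] at hz'
    simp only [smul_dotProduct, dotProduct_smul, smul_eq_mul] at hz'
    have hσ2 : 0 < σ^2 := by positivity
    have : σ^2 * (36 * t) < σ^2 * (2 * (z ⬝ᵥ (B *ᵥ z) - B.trace) + 2 * (z ⬝ᵥ g')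
      - 1/2 * ((B *ᵥ z + g') ⬝ᵥ (B *ᵥ z + g'))) := by
      rw [dotProduct_add z] at hz'
      linarith
    exact lt_of_mul_lt_mul_left this hσ2.le

lemma normTail {n : ℕ} (σ t : ℝ) :
    gaussPi n σ {ξ | σ^2 * (4 * t + 2 * n) < sqNorm ξ} ≤ ENNReal.ofReal (Real.exp (-t)) := by
  rw [gaussPi_eq, Measure.map_apply (by fun_prop)]
  swap
  · simp only [sqNorm_eq]
    exact (isOpen_lt (by fun_prop) (by fun_prop)).measurableSet
  refine le_trans (measure_mono ?_) (tail2 t)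
  intro z hz
  have hz' : σ^2 * (4 * t + 2 * n) < sqNorm (σ • z) := hz
  show 4 * t + 2 * (n:ℝ) < _
  rw [sqNorm_eq] at hz'
  simp only [smul_dotProduct, dotProduct_smul, smul_eq_mul] at hz'
  have : σ^2 * (4 * t + 2 * n) < σ^2 * (z ⬝ᵥ z) := by linarith
  exact lt_of_mul_lt_mul_left this (by positivity)

/-- Deviation functional of a pair. -/
def dev {n M : ℕ} (A : Fin M → Matrix (Fin n) (Fin n) ℝ) (b : Fin M → Fin n → ℝ) (σ : ℝ)
    (f : Fin n → ℝ) (p q : Fin M → ℝ) (ξ : Fin n → ℝ) : ℝ :=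
  2 * (ξ ⬝ᵥ (muV A b (f + ξ) p - muV A b (f + ξ) q))
       - 2 * σ^2 * (∑ j, p j * (A j).trace - ∑ j, q j * (A j).trace)
       - 1/2 * sqNorm (muV A b (f + ξ) p - muV A b (f + ξ) q)

lemma dev_tail {n M : ℕ} (A : Fin M → Matrix (Fin n) (Fin n) ℝ) (b : Fin M → Fin n → ℝ) (σ : ℝ)
    (f : Fin n → ℝ) (hA : ∀ j, opNorm (A j) ≤ 1) (p q : Fin M → ℝ) (hp : p ∈ simplex M)
    (hq : q ∈ simplex M) (t : ℝ) :
    gaussPi n σ {ξ | 36 * σ^2 * t < dev A b σ f p q ξ} ≤ ENNReal.ofReal (Real.exp (-t)) := by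
  set B : Matrix (Fin n) (Fin n) ℝ := ∑ j, (p j - q j) • A j with hBdef
  have hBx : ∀ x, B *ᵥ x = ∑ j, p j • (A j *ᵥ x) - ∑ j, q j • (A j *ᵥ x) := by
    intro x
    rw [hBdef, Matrix.sum_mulVec, ← Finset.sum_sub_distrib]
    exact Finset.sum_congr rfl fun j _ => by rw [Matrix.smul_mulVec, sub_smul]
  have hB : ∀ x, (B *ᵥ x) ⬝ᵥ (B *ᵥ x) ≤ 4 * (x ⬝ᵥ x) := by
    intro x
    have h1 := jensen (fun j => A j *ᵥ x) p hp (sqNorm x) (fun j => opn (A j) (hA j) x)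
    have h2 := jensen (fun j => A j *ᵥ x) q hq (sqNorm x) (fun j => opn (A j) (hA j) x)
    simp only [sqNorm_eq] at h1 h2
    rw [hBx]
    generalize ∑ j, p j • (A j *ᵥ x) = a at *
    generalize ∑ j, q j • (A j *ᵥ x) = c at *
    have h3 := two_dot_le a (-c) 1 one_pos
    simp only [dotProduct_neg, neg_dotProduct, neg_neg] at h3
    simp only [sub_dotProduct, dotProduct_sub, dotProduct_comm c a]
    linarith
  refine le_trans (le_of_eq ?_) (pairTail B hB (B *ᵥ f + ∑ j, (p j - q j) • b j) σ t)
  congr 1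
  ext ξ
  have e1 : muV A b (f + ξ) p - muV A b (f + ξ) q = B *ᵥ ξ + (B *ᵥ f + ∑ j, (p j - q j) • b j) := by
    simp only [muV, hBx, smul_add, Finset.sum_add_distrib, Matrix.mulVec_add, sub_smul,
      Finset.sum_sub_distrib]
    abel
  have e2 : B.trace = ∑ j, p j * (A j).trace - ∑ j, q j * (A j).trace := by
    simp [hBdef, Matrix.trace_sum, Matrix.trace_smul, sub_mul, Finset.sum_sub_distrib]
  simp only [Set.mem_ofPred_eq, dev, e1, e2]

lemma dev_cont {n M : ℕ} (A : Fin M → Matrix (Fin n) (Fin n) ℝ) (b : Fin M → Fin n → ℝ) (σ : ℝ)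
    (f : Fin n → ℝ) (p q : Fin M → ℝ) : Continuous (dev A b σ f p q) := by
  have hc : ∀ j, Continuous fun z : Fin n → ℝ => A j *ᵥ (f + z) :=
    fun j => Continuous.matrix_mulVec continuous_const (by fun_prop)
  unfold dev muV
  simp only [sqNorm_eq]
  fun_prop

/-- **Proposition 7.2, inequality \eqref{eq:soi-simplex-m}**: aggregation over the
grid `Λ^M_m` mimics the best convex combination at the optimal rate. -/
theorem convex_oracle_grid :
    ∃ C : ℝ, 0 < C ∧
      ∀ (n M : ℕ), 1 ≤ n → 1 ≤ M →
        (M : ℝ) ≤ Real.sqrt n * (Real.exp n - 1) →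
      ∀ (σ : ℝ) (f : Fin n → ℝ)
        (A : Fin M → Matrix (Fin n) (Fin n) ℝ) (b : Fin M → Fin n → ℝ)
        (R : ℝ), 0 < R →
        (1 / n : ℝ) * sqNorm f ≤ R ^ 2 →
        (∀ j, (1 / n : ℝ) * sqNorm (b j) ≤ R ^ 2) →
        (∀ j, opNorm (A j) ≤ 1) →
      ∀ m : ℕ, m = Nat.floor (Real.sqrt ((n : ℝ) / Real.log (1 + M / Real.sqrt n))) →
      ∀ (Ω : Type) (_ : MeasurableSpace Ω) (P : Measure Ω),
        IsProbabilityMeasure P →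
      ∀ (ξ : Ω → Fin n → ℝ), Measurable ξ → P.map ξ = gaussPi n σ →
      ∀ (lamhat : Ω → (Fin m → Fin M) → ℝ),
        (∀ ω, lamhat ω ∈ simplexGrid M m) →
        (∀ ω, ∀ lam ∈ simplexGrid M m,
          HpenGrid A b σ (f + ξ ω) (lamhat ω) ≤ HpenGrid A b σ (f + ξ ω) lam) →
      ∀ x : ℝ, 0 < x →
        ENNReal.ofReal (1 - 3 * Real.exp (-x)) ≤
          P {ω | ∀ θ ∈ simplex M,
              (1 / n : ℝ) * sqNorm (nuGrid A b (f + ξ ω) (lamhat ω) - f) ≤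
                (1 / n : ℝ) * sqNorm (muV A b (f + ξ ω) θ - f)
                  + C * max (R ^ 2) (σ ^ 2)
                      * Real.sqrt (Real.log (1 + M / Real.sqrt n) / n)
                  + C * σ ^ 2 * x / n} := by
  classical
  refine ⟨1000, by norm_num, ?_⟩
  intro n M hn hM hMn σ f A b R hR hf hb hA m hm Ω _ P hP ξ hξ hlaw lamhat hlam hmin x hx
  have hn' : (0:ℝ) < n := by exact_mod_cast hn
  have hM' : (0:ℝ) < M := by exact_mod_cast hM
  set s := Real.sqrt n with hs
  have hs0 : 0 < s := Real.sqrt_pos.mpr hn'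
  have hss : s^2 = n := Real.sq_sqrt hn'.le
  set L := Real.log (1 + M / s) with hL
  have hL0 : 0 < L := Real.log_pos (by have : 0 < M / s := by positivity
                                       linarith)
  have hLn : L ≤ n := by
    rw [hL, Real.log_le_iff_le_exp (by positivity)]
    have : M / s ≤ Real.exp n - 1 := by rw [div_le_iff₀ hs0]; linarith
    linarith
  set Q := Real.sqrt L with hQ
  have hQ0 : 0 < Q := Real.sqrt_pos.mpr hL0
  have e1 : Real.sqrt ((n:ℝ) / L) = s / Q := Real.sqrt_div hn'.le _
  have e2 : Real.sqrt (L / n) = Q / s := Real.sqrt_div hL0.le _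
  rw [e1] at hm
  have hQs : Q ≤ s := Real.sqrt_le_sqrt hLn
  have h1 : 1 ≤ s / Q := by rwa [le_div_iff₀ hQ0, one_mul]
  have hm1 : 1 ≤ m := by rw [hm]; exact Nat.floor_pos.mpr h1
  have hm' : (0:ℝ) < m := by exact_mod_cast hm1
  have hm1' : (1:ℝ) ≤ m := by exact_mod_cast hm1
  have hmle : (m:ℝ) ≤ s / Q := by rw [hm]; exact Nat.floor_le (by positivity)
  have hmlt : s / Q < m + 1 := by rw [hm]; exact Nat.lt_floor_add_one _
  have hminv : 1 / (m:ℝ) ≤ 2 * (Q / s) := by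
    have h2 : s / Q ≤ 2 * m := by linarith
    rw [div_le_iff₀ hQ0] at h2
    rw [div_le_iff₀ hm', mul_assoc, div_mul_eq_mul_div, mul_div_assoc', le_div_iff₀ hs0]
    linarith
  -- the grid
  set G := Finset.univ.image (gridPoint M m) with hG
  have hGne : G.Nonempty := by
    have : Nonempty (Fin M) := ⟨⟨0, hM⟩⟩
    exact Finset.univ_nonempty.image _
  have hN0 : (0:ℝ) < G.card := by exact_mod_cast hGne.card_pos
  have hlogN : Real.log G.card ≤ 6 * (s * Q) := by
    have a1 : (G.card : ℝ) ≤ ((M + m).choose m : ℝ) := by exact_mod_cast grid_card M m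
    have a2 := Real.log_le_log hN0 a1
    have a3 := log_choose M m hM hm1
    have a4 := numeric M m s L hM' hm' hs0 hL hmle
    linarith
  have hGs : ∀ p ∈ G, p ∈ simplex M := by
    intro p hp
    obtain ⟨u, -, rfl⟩ := Finset.mem_image.mp hp
    exact grid_simplex M m hm1 u
  set t := x + 2 * Real.log G.card with ht
  let E : (Fin M → ℝ) × (Fin M → ℝ) → Set (Fin n → ℝ) := fun pq =>
    {z | 36 * σ^2 * t < dev A b σ f pq.1 pq.2 z}
  let E2 : Set (Fin n → ℝ) := {z | σ^2 * (4 * x + 2 * n) < sqNorm z}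
  let bad : Set (Fin n → ℝ) := (⋃ pq ∈ G ×ˢ G, E pq) ∪ E2
  have hbadm : MeasurableSet bad := by
    refine MeasurableSet.union (Finset.measurableSet_biUnion _ fun pq _ => ?_) ?_
    · exact (isOpen_lt continuous_const (dev_cont A b σ f pq.1 pq.2)).measurableSet
    · simp only [E2, sqNorm_eq]
      exact (isOpen_lt (by fun_prop) (by fun_prop)).measurableSet
  have hbad : gaussPi n σ bad ≤ ENNReal.ofReal (2 * Real.exp (-x)) := by
    have b1 : gaussPi n σ (⋃ pq ∈ G ×ˢ G, E pq) ≤ ENNReal.ofReal (Real.exp (-x)) := by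
      calc _ ≤ ∑ pq ∈ G ×ˢ G, gaussPi n σ (E pq) := measure_biUnion_finset_le _ _
        _ ≤ ∑ pq ∈ G ×ˢ G, ENNReal.ofReal (Real.exp (-t)) := by
            refine Finset.sum_le_sum fun pq hpq => ?_
            rw [Finset.mem_product] at hpq
            exact dev_tail A b σ f hA pq.1 pq.2 (hGs _ hpq.1) (hGs _ hpq.2) t
        _ = ENNReal.ofReal (Real.exp (-x)) := by
            rw [Finset.sum_const, Finset.card_product, nsmul_eq_mul, ← ENNReal.ofReal_natCast,
              ← ENNReal.ofReal_mul (by positivity)]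
            congr 1
            have : -t = -x + -(2 * Real.log G.card) := by rw [ht]; ring
            rw [this, Real.exp_add, Real.exp_neg (2 * _), two_mul, Real.exp_add, Real.exp_log hN0]
            push_cast
            field_simp
    have b2 : gaussPi n σ E2 ≤ ENNReal.ofReal (Real.exp (-x)) := normTail σ x
    calc _ ≤ _ := measure_union_le _ _
      _ ≤ ENNReal.ofReal (Real.exp (-x)) + ENNReal.ofReal (Real.exp (-x)) := add_le_add b1 b2
      _ = _ := by rw [← ENNReal.ofReal_add (Real.exp_pos _).le (Real.exp_pos _).le, two_mul]
  have hprob : ENNReal.ofReal (1 - 3 * Real.exp (-x)) ≤ P (ξ ⁻¹' badᶜ) := by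
    have c0 : P (ξ ⁻¹' bad) ≤ ENNReal.ofReal (2 * Real.exp (-x)) := by
      rw [← Measure.map_apply hξ hbadm, hlaw]; exact hbad
    rw [Set.preimage_compl, prob_compl_eq_one_sub (hξ hbadm)]
    calc ENNReal.ofReal (1 - 3 * Real.exp (-x)) ≤ ENNReal.ofReal (1 - 2 * Real.exp (-x)) := by
          apply ENNReal.ofReal_le_ofReal; linarith [Real.exp_pos (-x)]
      _ = 1 - ENNReal.ofReal (2 * Real.exp (-x)) := by
          rw [ENNReal.ofReal_sub _ (by positivity), ENNReal.ofReal_one]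
      _ ≤ _ := tsub_le_tsub_left c0 1
  refine hprob.trans (measure_mono ?_)
  intro ω hω
  have hω' : ξ ω ∉ bad := hω
  simp only [bad, Set.mem_union, not_or, Set.mem_iUnion, not_exists] at hω'
  obtain ⟨hg1, hg2⟩ := hω'
  have hg2' : sqNorm (ξ ω) ≤ σ^2 * (4 * x + 2 * n) := not_lt.mp hg2
  have hpair : ∀ u k : Fin m → Fin M, dev A b σ f (gridPoint M m u) (gridPoint M m k) (ξ ω) ≤ 36 * σ^2 * t := by
    intro u k
    exact not_lt.mp (hg1 (gridPoint M m u, gridPoint M m k) (Finset.mk_mem_product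
      (Finset.mem_image_of_mem _ (Finset.mem_univ _)) (Finset.mem_image_of_mem _ (Finset.mem_univ _))))
  have hfn : sqNorm f ≤ n * R^2 := by
    rw [one_div, inv_mul_le_iff₀ hn'] at hf; exact hf
  have hbn : ∀ j, sqNorm (b j) ≤ n * R^2 := by
    intro j
    have := hb j
    rw [one_div, inv_mul_le_iff₀ hn'] at this; exact this
  have hW : ∀ j, sqNorm ((A j).mulVec (f + ξ ω) + b j) ≤ 6 * n * R^2 + 3 * (σ^2 * (4 * x + 2 * n)) := by
    intro j
    have a1 := (opn (A j) (hA j) f).trans hfn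
    have a2 := (opn (A j) (hA j) (ξ ω)).trans hg2'
    have a3 := hbn j
    rw [Matrix.mulVec_add]
    have : ∀ a c d : Fin n → ℝ, sqNorm (a + c + d) ≤ 3 * (sqNorm a + sqNorm c + sqNorm d) := by
      intro a c d
      simp only [sqNorm, ← Finset.sum_add_distrib, Finset.mul_sum]
      refine Finset.sum_le_sum fun i _ => ?_
      simp only [Pi.add_apply]
      nlinarith [sq_nonneg (a i - c i), sq_nonneg (a i - d i), sq_nonneg (c i - d i)]
    have := this (A j *ᵥ f) (A j *ᵥ ξ ω) (b j)
    linarith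
  intro θ hθ
  have hdet := det A b σ f (ξ ω) (lamhat ω) (hlam ω) (hmin ω) hm1 (36 * σ^2 * t) _ hpair hW θ hθ
  set X := sqNorm (nuGrid A b (f + ξ ω) (lamhat ω) - f)
  set Y := sqNorm (muV A b (f + ξ ω) θ - f)
  rw [e2]
  set K := max (R^2) (σ^2) with hK
  have hKR : R^2 ≤ K := le_max_left _ _
  have hKσ : σ^2 ≤ K := le_max_right _ _
  have hσ0 : 0 ≤ σ^2 := sq_nonneg σ
  have hK0 : 0 ≤ K := hσ0.trans hKσ
  have hQs0 : 0 < Q / s := by positivity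
  have d1 : (6 * n * R^2 + 3 * (σ^2 * (4 * x + 2 * n))) / m ≤ 24 * n * (K * (Q / s)) + 12 * σ^2 * x := by
    have : (6 * n * R^2 + 3 * (σ^2 * (4 * x + 2 * n))) / m
      = (6 * n * (R^2 + σ^2)) * (1 / m) + 12 * σ^2 * x * (1/m) := by field_simp; ring
    rw [this]
    have u1 : (6 * n * (R^2 + σ^2)) * (1 / (m:ℝ)) ≤ (6 * n * (K + K)) * (2 * (Q / s)) := by gcongr
    have u2 : 12 * σ^2 * x * (1/(m:ℝ)) ≤ 12 * σ^2 * x * 1 := by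
      gcongr
      rw [div_le_iff₀ hm']; linarith
    linarith
  have d2 : 36 * σ^2 * t ≤ 36 * σ^2 * x + 432 * n * (K * (Q / s)) := by
    have : s * Q = n * (Q / s) := by rw [← hss]; field_simp
    have u1 : σ^2 * (2 * Real.log G.card) ≤ σ^2 * (12 * (n * (Q / s))) := by
      exact mul_le_mul_of_nonneg_left (by linarith) (sq_nonneg σ)
    have u2 : σ^2 * (12 * (n * (Q / s))) ≤ K * (12 * (n * (Q / s))) := by gcongr
    rw [ht]
    linarith
  have d3 : X ≤ Y + 456 * n * (K * (Q / s)) + 48 * σ^2 * x := by linarith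
  have d4 : (1 / n : ℝ) * X ≤ (1 / n : ℝ) * (Y + 456 * n * (K * (Q / s)) + 48 * σ^2 * x) := by gcongr
  have d5 : (1 / n : ℝ) * (Y + 456 * n * (K * (Q / s)) + 48 * σ^2 * x)
      = (1 / n : ℝ) * Y + 456 * (K * (Q / s)) + 48 * (σ^2 * x / n) := by field_simp
  have d6 : 0 ≤ σ^2 * x / n := by positivity
  have d7 : 0 ≤ K * (Q / s) := by positivity
  have d8 : 1000 * σ ^ 2 * x / n = 1000 * (σ^2 * x / n) := by ring
  rw [d8]
  linarith

end
end

section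
/- Let A and B be two n×n real matrices satisfying A = Aᵀ = A² and B = Bᵀ = B² (orthogonal projection matrices). Then |Tr(A − B)| ≤ ‖A − B‖_F², where ‖·‖_F is the Frobenius norm. -/
open Finset

noncomputable section

/-- Frobenius (Hilbert–Schmidt) norm squared of a square matrix. -/
def frobSq {n : ℕ} (A : Matrix (Fin n) (Fin n) ℝ) : ℝ := ∑ i, ∑ j, (A i j) ^ 2

theorem frobSq_eq_trace_aux {n : ℕ} (M : Matrix (Fin n) (Fin n) ℝ) :
    frobSq M = (M * Matrix.transpose M).trace := by
  simp [frobSq, Matrix.trace, Matrix.mul_apply, sq]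

theorem trace_mul_le_aux {n : ℕ} (A B : Matrix (Fin n) (Fin n) ℝ)
    (hAsymm : Matrix.transpose A = A) (hAidem : A * A = A)
    (hBsymm : Matrix.transpose B = B) (hBidem : B * B = B) :
    (A * B).trace ≤ A.trace := by
  have h0 : 0 ≤ frobSq (A - A * B) :=
    Finset.sum_nonneg fun i _ => Finset.sum_nonneg fun j _ => sq_nonneg _
  have e : (A - A * B) * (A - B * A) = A - A * B * A := by
    have h1 : A * B * (B * A) = A * B * A := by
      rw [Matrix.mul_assoc, ← Matrix.mul_assoc B, hBidem, Matrix.mul_assoc]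
    have h2 : A * (B * A) = A * B * A := by rw [Matrix.mul_assoc]
    rw [Matrix.sub_mul, Matrix.mul_sub, Matrix.mul_sub, hAidem, h1, h2]
    abel
  rw [frobSq_eq_trace_aux, Matrix.transpose_sub, Matrix.transpose_mul, hAsymm, hBsymm, e,
    Matrix.trace_sub, Matrix.trace_mul_comm, ← Matrix.mul_assoc, hAidem] at h0
  linarith

/-- **Lemma 8.2**: for two orthogonal projection matrices `A, B`,
`|Tr(A - B)| ≤ ‖A - B‖_F²`. -/
theorem trace_diff_le_frobSq_of_projections
    {n : ℕ} (A B : Matrix (Fin n) (Fin n) ℝ)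
    (hAsymm : Matrix.transpose A = A) (hAidem : A * A = A)
    (hBsymm : Matrix.transpose B = B) (hBidem : B * B = B) :
    |(A - B).trace| ≤ frobSq (A - B) := by
  have h1 := trace_mul_le_aux A B hAsymm hAidem hBsymm hBidem
  have h2 := trace_mul_le_aux B A hBsymm hBidem hAsymm hAidem
  have h3 := Matrix.trace_mul_comm A B
  rw [frobSq_eq_trace_aux, Matrix.transpose_sub, hAsymm, hBsymm, Matrix.sub_mul, Matrix.mul_sub,
    Matrix.mul_sub, hAidem, hBidem]
  simp only [Matrix.trace_sub]
  rw [abs_le]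
  constructor <;> linarith

end
end

section
/- Let m ≥ 1 and Λ^M_m = { (1/m)Σ_{q=1}^m u_q : u_1,…,u_m ∈ {e_1,…,e_M} } ⊂ Λ^M. Let Q(θ) = θᵀΣθ + vᵀθ + a for some positive semi-definite M×M matrix Σ, v ∈ R^M and a ∈ R. Then min_{θ∈Λ^M_m} Q(θ) ≤ min_{θ∈Λ^M} Q(θ) + 4 max_{j=1,…,M} Σ_{jj} / m. -/
open Finset

noncomputable section

open Matrix in
lemma maurey_step {M : ℕ} (S : Matrix (Fin M) (Fin M) ℝ) (hS : S.PosSemidef)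
    (v : Fin M → ℝ) (a D : ℝ) (hD : ∀ j, S j j ≤ D) (Q : (Fin M → ℝ) → ℝ)
    (hQ : ∀ θ, Q θ = θ ⬝ᵥ (S *ᵥ θ) + v ⬝ᵥ θ + a)
    (θ : Fin M → ℝ) (h0 : ∀ j, 0 ≤ θ j) (h1 : ∑ j, θ j = 1) (x : Fin M → ℝ) (t : ℝ) :
    ∃ j, Q (x + t • (Pi.single j 1 - θ)) ≤ Q x + t ^ 2 * D := by
  have hsym : ∀ y z : Fin M → ℝ, y ⬝ᵥ (S *ᵥ z) = z ⬝ᵥ (S *ᵥ y) := by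
    intro y z
    have hT : Sᵀ = S := by simpa using hS.isHermitian.eq
    rw [dotProduct_mulVec, ← mulVec_transpose, hT, dotProduct_comm]
  have hq : 0 ≤ θ ⬝ᵥ (S *ᵥ θ) := by simpa using hS.dotProduct_mulVec_nonneg θ
  have hexp : ∀ j, Q (x + t • (Pi.single j 1 - θ)) =
      Q x + t * (2 * (S *ᵥ x) j + v j - (2 * θ ⬝ᵥ (S *ᵥ x) + v ⬝ᵥ θ))
        + t ^ 2 * (S j j - 2 * (S *ᵥ θ) j + θ ⬝ᵥ (S *ᵥ θ)) := by
    intro j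
    have e1 := hsym x (Pi.single j 1)
    have e2 := hsym θ (Pi.single j 1)
    have e3 := hsym x θ
    have e4 : (Pi.single j 1 : Fin M → ℝ) ⬝ᵥ (S *ᵥ Pi.single j 1) = S j j := by simp
    have e5 : (Pi.single j 1 : Fin M → ℝ) ⬝ᵥ (S *ᵥ x) = (S *ᵥ x) j := by simp
    have e6 : (Pi.single j 1 : Fin M → ℝ) ⬝ᵥ (S *ᵥ θ) = (S *ᵥ θ) j := by simp
    have e7 : v ⬝ᵥ (Pi.single j 1 : Fin M → ℝ) = v j := by simp
    rw [e5] at e1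
    rw [e6] at e2
    rw [hQ, hQ]
    simp only [mulVec_add, mulVec_smul, mulVec_sub, add_dotProduct, dotProduct_add,
      sub_dotProduct, dotProduct_sub, smul_dotProduct, dotProduct_smul, smul_eq_mul,
      e1, e2, e3, e4, e5, e6, e7]
    ring
  by_contra hcon
  push Not at hcon
  obtain ⟨j0, hj0⟩ : ∃ j, 0 < θ j := by
    by_contra h
    push Not at h
    have : ∑ j, θ j ≤ 0 := Finset.sum_nonpos fun j _ => h j
    linarith
  have hlt : ∑ j, θ j * (Q x + t ^ 2 * D) < ∑ j, θ j * Q (x + t • (Pi.single j 1 - θ)) :=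
    Finset.sum_lt_sum (fun j _ => mul_le_mul_of_nonneg_left (hcon j).le (h0 j))
      ⟨j0, Finset.mem_univ _, mul_lt_mul_of_pos_left (hcon j0) hj0⟩
  rw [← Finset.sum_mul, h1, one_mul] at hlt
  have hle : ∑ j, θ j * Q (x + t • (Pi.single j 1 - θ)) ≤
      ∑ j, (θ j * (Q x - t * (2 * θ ⬝ᵥ (S *ᵥ x) + v ⬝ᵥ θ) + t ^ 2 * D + t ^ 2 * θ ⬝ᵥ (S *ᵥ θ))
        + (2 * t) * (θ j * (S *ᵥ x) j) + t * (v j * θ j)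
        - (2 * t ^ 2) * (θ j * (S *ᵥ θ) j)) := by
    refine Finset.sum_le_sum fun j _ => ?_
    rw [hexp]
    have := mul_le_mul_of_nonneg_left (hD j) (mul_nonneg (h0 j) (sq_nonneg t))
    linarith
  rw [Finset.sum_sub_distrib, Finset.sum_add_distrib, Finset.sum_add_distrib, ← Finset.sum_mul,
    ← Finset.mul_sum, ← Finset.mul_sum, ← Finset.mul_sum, h1] at hle
  change _ ≤ _ + 2 * t * (θ ⬝ᵥ (S *ᵥ x)) + t * (v ⬝ᵥ θ) - 2 * t ^ 2 * (θ ⬝ᵥ (S *ᵥ θ)) at hle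
  have := mul_nonneg (sq_nonneg t) hq
  linarith

/-- **Lemma (Maurey argument)**: for a quadratic function `Q` with positive
semi-definite quadratic part `Σ`, the minimum of `Q` over the grid `Λ^M_m` exceeds
the minimum over the whole simplex by at most `4 max_j Σ_jj / m`.  (The minimum over
the grid is expressed through an existential witness.) -/
theorem maurey_argument
    {M m : ℕ} (hm : 1 ≤ m) (hM : 1 ≤ M)
    (S : Matrix (Fin M) (Fin M) ℝ) (hS : S.PosSemidef)
    (v : Fin M → ℝ) (a : ℝ) (Q : (Fin M → ℝ) → ℝ)
    (hQ : ∀ θ, Q θ = (∑ i, ∑ j, θ i * S i j * θ j) + (∑ j, v j * θ j) + a) :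
    ∀ θ ∈ simplex M, ∃ u : Fin m → Fin M,
      Q (gridPoint M m u) ≤ Q θ + 4 * (⨆ j, S j j) / m := by
  classical
  rintro θ ⟨h0, h1⟩
  have hD : ∀ j, S j j ≤ ⨆ j, S j j := fun j =>
    le_ciSup (f := fun j => S j j) (Set.finite_range _).bddAbove j
  have hD0 : 0 ≤ ⨆ j, S j j := le_trans hS.diag_nonneg (hD ⟨0, hM⟩)
  set D := ⨆ j, S j j
  have hQ' : ∀ θ, Q θ = dotProduct θ (S.mulVec θ) + dotProduct v θ + a := by
    intro θ
    rw [hQ]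
    simp only [dotProduct, Matrix.mulVec, Finset.mul_sum, mul_assoc]
  have hm0 : (0 : ℝ) < m := by exact_mod_cast hm
  have key : ∀ k : ℕ, ∃ u : ℕ → Fin M,
      Q (θ + ∑ q ∈ range k, (1 / (m : ℝ)) • ((Pi.single (u q) 1 : Fin M → ℝ) - θ))
        ≤ Q θ + k * ((1 / (m : ℝ)) ^ 2 * D) := by
    intro k
    induction k with
    | zero => exact ⟨fun _ => ⟨0, hM⟩, by simp⟩
    | succ k ih =>
      obtain ⟨u, hu⟩ := ih
      obtain ⟨j, hj⟩ := maurey_step S hS v a D hD Q hQ' θ h0 h1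
        (θ + ∑ q ∈ range k, (1 / (m : ℝ)) • ((Pi.single (u q) 1 : Fin M → ℝ) - θ)) (1 / (m : ℝ))
      refine ⟨Function.update u k j, ?_⟩
      have hs : ∑ q ∈ range k, (1 / (m : ℝ)) •
            ((Pi.single (Function.update u k j q) 1 : Fin M → ℝ) - θ)
          = ∑ q ∈ range k, (1 / (m : ℝ)) • ((Pi.single (u q) 1 : Fin M → ℝ) - θ) := by
        refine Finset.sum_congr rfl fun q hq => ?_
        rw [Function.update_of_ne (Finset.mem_range.1 hq).ne]
      rw [Finset.sum_range_succ, hs, Function.update_self, ← add_assoc]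
      push_cast
      linarith
  obtain ⟨u, hu⟩ := key m
  refine ⟨fun q => u q, ?_⟩
  have hg : gridPoint M m (fun q => u q) =
      θ + ∑ q ∈ range m, (1 / (m : ℝ)) • ((Pi.single (u q) 1 : Fin M → ℝ) - θ) := by
    funext j
    simp only [gridPoint, Pi.add_apply, Finset.sum_apply, Pi.smul_apply, Pi.sub_apply, smul_eq_mul]
    rw [← Finset.mul_sum, Finset.sum_sub_distrib,
      Fin.sum_univ_eq_sum_range (fun q => if u q = j then (1 : ℝ) else 0) m]
    simp only [Pi.single_apply, eq_comm (a := j), Finset.sum_const, Finset.card_range, nsmul_eq_mul]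
    field_simp
    ring
  rw [hg]
  refine hu.trans ?_
  have h2 : (m : ℝ) * ((1 / (m : ℝ)) ^ 2 * D) = D / m := by field_simp
  rw [h2]
  have : D / m ≤ 4 * D / m := by gcongr; linarith
  linarith

end
end

section
/- Let ξ ~ N(0, σ² I_n) in R^n. For any n×n real matrix B and any x > 0, P( ξᵀBξ − σ²Tr B > 2σ²‖B‖_F √x + 2σ²‖B‖_op x ) ≤ exp(−x), where σ²Tr B = E[ξᵀBξ], ‖·‖_F is the Frobenius norm and ‖·‖_op the operator norm. -/
open MeasureTheory ProbabilityTheory Finset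

noncomputable section

lemma aux_log (u m : ℝ) (hum : u ≤ m) (hm0 : 0 ≤ m) (hm : m < 1) :
    -u - u ^ 2 / (2 * (1 - m)) ≤ Real.log (1 - u) := by
  rcases le_total 0 u with hu | hu
  · have h1 : 0 < 1 - u := by linarith
    have h2 : -u - u ^ 2 / (2 * (1 - m)) ≤ -u - u ^ 2 / (2 * (1 - u)) := by
      have : u ^ 2 / (2 * (1 - u)) ≤ u ^ 2 / (2 * (1 - m)) := by
        apply div_le_div_of_nonneg_left (sq_nonneg u) (by linarith) (by linarith)
      linarith
    refine h2.trans ?_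
    have h3 : 0 ≤ Real.log ((1 - u)⁻¹) :=
      Real.log_nonneg ((one_le_inv₀ h1).2 (by linarith))
    have h4 := Real.self_le_sinh_iff.2 h3
    rw [Real.sinh_log (by positivity), Real.log_inv, inv_inv] at h4
    have h5 : -u - u ^ 2 / (2 * (1 - u)) = -(((1 - u)⁻¹ - (1 - u)) / 2) := by
      field_simp
      ring
    rw [h5]; linarith
  · have h := Real.le_log_one_add_of_nonneg (x := -u) (by linarith)
    rw [← sub_eq_add_neg] at h
    refine le_trans ?_ h
    have h2 : u ^ 2 / 2 ≤ u ^ 2 / (2 * (1 - m)) := by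
      apply div_le_div_of_nonneg_left (sq_nonneg u) (by linarith) (by linarith)
    have h3 : -u - u ^ 2 / 2 ≤ 2 * -u / (-u + 2) := by
      rw [le_div_iff₀ (by linarith)]
      nlinarith [mul_nonneg (sq_nonneg u) (by linarith : 0 ≤ -u)]
    linarith

lemma aux_pdf (s : ℝ) (z : ℝ) : gaussianPDFReal 0 1 z • Real.exp (s * z ^ 2)
    = (√(2 * Real.pi))⁻¹ * Real.exp (-(1 / 2 - s) * z ^ 2) := by
  simp only [gaussianPDFReal, smul_eq_mul, mul_assoc, ← Real.exp_add]
  congr 2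
  · simp
  · congr 1
    simp
    ring

lemma aux_integrable (s : ℝ) (hs : 2 * s < 1) :
    Integrable (fun z : ℝ => Real.exp (s * z ^ 2)) (gaussianReal 0 1) := by
  rw [gaussianReal_of_var_ne_zero _ one_ne_zero,
    integrable_withDensity_iff_integrable_smul' (measurable_gaussianPDF _ _)
      (ae_of_all _ fun _ ↦ gaussianPDF_lt_top)]
  simp only [toReal_gaussianPDF, aux_pdf]
  exact (integrable_exp_neg_mul_sq (by linarith)).const_mul _

lemma aux_integral (s : ℝ) (hs : 2 * s < 1) :
    ∫ z : ℝ, Real.exp (s * z ^ 2) ∂(gaussianReal 0 1)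
      = Real.exp (-(1 / 2) * Real.log (1 - 2 * s)) := by
  rw [integral_gaussianReal_eq_integral_smul one_ne_zero]
  simp only [aux_pdf]
  rw [integral_const_mul, integral_gaussian, ← Real.sqrt_inv, ← Real.sqrt_mul (by positivity)]
  have h : 0 < 1 - 2 * s := by linarith
  have h2 : (2 * Real.pi)⁻¹ * (Real.pi / (1 / 2 - s)) = (1 - 2 * s)⁻¹ := by
    have : (1 / 2 - s) ≠ 0 := by linarith
    have := Real.pi_ne_zero
    field_simp
  rw [h2, Real.sqrt_eq_rpow, Real.rpow_def_of_pos (by positivity), Real.log_inv]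
  congr 1; ring

lemma aux_diag {n : ℕ} (l : Fin n → ℝ) (F M x : ℝ) (hF : 0 < F) (hM : 0 ≤ M) (hx : 0 < x)
    (hl : ∀ i, l i ≤ M) (hsq : ∑ i, l i ^ 2 ≤ F ^ 2) :
    (Measure.pi fun _ : Fin n => gaussianReal 0 1).real
      {z | ∑ i, l i + 2 * F * √x + 2 * M * x ≤ ∑ i, l i * z i ^ 2} ≤ Real.exp (-x) := by
  have hr : 0 < √x := Real.sqrt_pos.2 hx
  have hxr : √x ^ 2 = x := Real.sq_sqrt hx.le
  set r := √x with hrdef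
  have hD : 0 < F + 2 * M * r := by positivity
  set t := r / (F + 2 * M * r) with ht
  have htpos : 0 < t := by positivity
  have h1m : 1 - 2 * t * M = F / (F + 2 * M * r) := by
    rw [ht]; field_simp; ring
  have hm1 : 2 * t * M < 1 := by
    have : 0 < F / (F + 2 * M * r) := by positivity
    linarith
  have hm0 : 0 ≤ 2 * t * M := by positivity
  have hu : ∀ i, 2 * (t * l i) ≤ 2 * t * M := fun i => by
    have := mul_le_mul_of_nonneg_left (hl i) htpos.le
    linarith
  have hexp : ∀ z : Fin n → ℝ, Real.exp (t * ∑ i, l i * z i ^ 2)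
      = ∏ i, Real.exp (t * l i * z i ^ 2) := fun z => by
    rw [← Real.exp_sum, Finset.mul_sum]
    simp only [mul_assoc]
  have hint : Integrable (fun z : Fin n → ℝ => Real.exp (t * ∑ i, l i * z i ^ 2))
      (Measure.pi fun _ : Fin n => gaussianReal 0 1) := by
    simp only [hexp]
    exact Integrable.fintype_prod (f := fun i (z : ℝ) => Real.exp (t * l i * z ^ 2))
      (fun i => aux_integrable _ ((hu i).trans_lt hm1))
  refine (measure_ge_le_exp_mul_mgf _ htpos.le hint).trans ?_
  have hmgf : mgf (fun z : Fin n → ℝ => ∑ i, l i * z i ^ 2)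
      (Measure.pi fun _ : Fin n => gaussianReal 0 1) t
      = Real.exp (∑ i, -(1 / 2) * Real.log (1 - 2 * (t * l i))) := by
    simp only [mgf, hexp]
    rw [integral_fintype_prod_eq_prod (fun i (z : ℝ) => Real.exp (t * l i * z ^ 2)),
      Real.exp_sum]
    exact Finset.prod_congr rfl fun i _ => aux_integral _ ((hu i).trans_lt hm1)
  rw [hmgf, ← Real.exp_add, Real.exp_le_exp]
  have hsum : ∑ i, -(1 / 2) * Real.log (1 - 2 * (t * l i))
      ≤ ∑ i, (t * l i + t ^ 2 / (1 - 2 * t * M) * l i ^ 2) := by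
    refine Finset.sum_le_sum fun i _ => ?_
    have h := aux_log _ _ (hu i) hm0 hm1
    have e : (2 * (t * l i)) ^ 2 / (2 * (1 - 2 * t * M))
        = 2 * (t ^ 2 / (1 - 2 * t * M) * l i ^ 2) := by
      have : 1 - 2 * t * M ≠ 0 := by linarith
      field_simp
    rw [e] at h
    linarith
  rw [Finset.sum_add_distrib, ← Finset.mul_sum (f := l), ← Finset.mul_sum (f := fun i => l i ^ 2)] at hsum
  have h3 : t ^ 2 / (1 - 2 * t * M) * ∑ i, l i ^ 2 ≤ t ^ 2 / (1 - 2 * t * M) * F ^ 2 := by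
    apply mul_le_mul_of_nonneg_left hsq
    exact div_nonneg (sq_nonneg _) (by linarith)
  have h4 : t ^ 2 / (1 - 2 * t * M) * F ^ 2 - t * (2 * F * r + 2 * M * x) = -x := by
    rw [h1m, ht, ← hxr]
    field_simp
    ring
  linarith

lemma sqNorm_mulVec_le {n : ℕ} (B : Matrix (Fin n) (Fin n) ℝ) (v : Fin n → ℝ) :
    sqNorm (B.mulVec v) ≤ frobSq B * sqNorm v := by
  unfold sqNorm frobSq
  rw [Finset.sum_mul]
  refine Finset.sum_le_sum fun i _ => ?_
  exact Finset.sum_mul_sq_le_sq_mul_sq Finset.univ (B i) v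

lemma opNorm_nonneg {n : ℕ} (B : Matrix (Fin n) (Fin n) ℝ) : 0 ≤ opNorm B := by
  apply Real.sSup_nonneg
  rintro c ⟨x, -, rfl⟩
  exact Real.sqrt_nonneg _

lemma frobSq_nonneg {n : ℕ} (B : Matrix (Fin n) (Fin n) ℝ) : 0 ≤ frobSq B :=
  Finset.sum_nonneg fun _ _ => Finset.sum_nonneg fun _ _ => sq_nonneg _

lemma quad_le_opNorm {n : ℕ} (B : Matrix (Fin n) (Fin n) ℝ) (v : Fin n → ℝ) (hv : sqNorm v = 1) :
    ∑ i, v i * (B.mulVec v) i ≤ opNorm B := by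
  have h1 : √(sqNorm (B.mulVec v)) ≤ opNorm B := by
    apply le_csSup
    · refine ⟨√(frobSq B), ?_⟩
      rintro c ⟨y, hy, rfl⟩
      apply Real.sqrt_le_sqrt
      refine (sqNorm_mulVec_le B y).trans ?_
      exact mul_le_of_le_one_right (frobSq_nonneg B) hy
    · exact ⟨v, hv.le, rfl⟩
  refine le_trans ?_ h1
  apply Real.le_sqrt_of_sq_le
  have := Finset.sum_mul_sq_le_sq_mul_sq Finset.univ v (B.mulVec v)
  refine this.trans ?_
  change sqNorm v * sqNorm _ ≤ _
  rw [hv, one_mul]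

open Matrix in
lemma aux_spectral {n : ℕ} (B : Matrix (Fin n) (Fin n) ℝ) :
    ∃ (b : OrthonormalBasis (Fin n) ℝ (EuclideanSpace ℝ (Fin n))) (l : Fin n → ℝ),
      (∀ z y : Fin n → ℝ, y = (∑ i, z i • b i : EuclideanSpace ℝ (Fin n)).ofLp →
        ∑ i, y i * (B.mulVec y) i = ∑ i, l i * z i ^ 2) ∧
      ∑ i, l i = B.trace ∧ ∑ i, l i ^ 2 ≤ frobSq B ∧ ∀ i, l i ≤ opNorm B := by
  set S : Matrix (Fin n) (Fin n) ℝ := (1 / 2 : ℝ) • (B + Bᵀ) with hS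
  have hH : S.IsHermitian := by
    rw [Matrix.IsHermitian, hS, conjTranspose_eq_transpose_of_trivial]
    simp [add_comm]
  have hquad : ∀ y : Fin n → ℝ, ∑ i, y i * (B.mulVec y) i = y ⬝ᵥ S *ᵥ y := by
    intro y
    have h : y ⬝ᵥ Bᵀ *ᵥ y = y ⬝ᵥ B *ᵥ y := by
      rw [mulVec_transpose, dotProduct_comm, dotProduct_mulVec]
    rw [hS, smul_mulVec, add_mulVec, dotProduct_smul, dotProduct_add, h]
    simp only [dotProduct, smul_eq_mul]
    ring
  have key : ∀ z y : Fin n → ℝ, y = (∑ i, z i • hH.eigenvectorBasis i : EuclideanSpace ℝ (Fin n)).ofLp →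
        ∑ i, y i * (B.mulVec y) i = ∑ i, hH.eigenvalues i * z i ^ 2 := by
    intro z y hy
    rw [hquad]
    set b := hH.eigenvectorBasis with hb
    have hy' : y = ∑ i, z i • (b i).ofLp := by
      rw [hy]; simp
    have hSy : S *ᵥ y = ∑ i, (z i * hH.eigenvalues i) • (b i).ofLp := by
      rw [hy', mulVec_sum]
      refine Finset.sum_congr rfl fun i _ => ?_
      rw [mulVec_smul, hH.mulVec_eigenvectorBasis, smul_smul]
    have horth : ∀ i j, (b i).ofLp ⬝ᵥ (b j).ofLp = if i = j then 1 else 0 := by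
      intro i j
      have := orthonormal_iff_ite.1 b.orthonormal j i
      rw [EuclideanSpace.inner_eq_star_dotProduct] at this
      simpa [eq_comm] using this
    rw [hSy, hy']
    simp only [sum_dotProduct, dotProduct_sum, smul_dotProduct, dotProduct_smul, horth]
    simp
    refine Finset.sum_congr rfl fun i _ => ?_
    ring
  refine ⟨hH.eigenvectorBasis, hH.eigenvalues, key, ?_, ?_, ?_⟩
  · have h := hH.trace_eq_sum_eigenvalues
    simp only [RCLike.ofReal_real_eq_id, id] at h
    rw [← h, hS]
    simp
    ring
  · have h : (S * S).trace = ∑ i, hH.eigenvalues i ^ 2 := by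
      conv_lhs => rw [hH.spectral_theorem]
      rw [← map_mul, Unitary.conjStarAlgAut_apply, trace_mul_comm, ← mul_assoc]
      simp [diagonal_mul_diagonal, trace_diagonal, sq]
    rw [← h]
    have h2 : (S * S).trace = ∑ i, ∑ j, ((B i j + B j i) / 2) ^ 2 := by
      simp only [trace, Matrix.diag, mul_apply, hS]
      refine Finset.sum_congr rfl fun i _ => Finset.sum_congr rfl fun j _ => ?_
      simp
      ring
    have h3 : frobSq B = ∑ i, ∑ j, (B i j ^ 2 + B j i ^ 2) / 2 := by
      have : ∑ i, ∑ j, B j i ^ 2 = frobSq B := Finset.sum_comm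
      simp only [← Finset.sum_div, Finset.sum_add_distrib, this]
      unfold frobSq
      ring
    rw [h2, h3]
    refine Finset.sum_le_sum fun i _ => Finset.sum_le_sum fun j _ => ?_
    nlinarith [sq_nonneg (B i j - B j i)]
  · intro i
    have h := key (Pi.single i 1) (hH.eigenvectorBasis i).ofLp (by simp [Pi.single_apply])
    have h2 := quad_le_opNorm B (hH.eigenvectorBasis i).ofLp (by
      have := hH.eigenvectorBasis.norm_eq_one i
      rw [EuclideanSpace.norm_eq, Real.sqrt_eq_one] at this
      simpa [sqNorm] using this)
    rw [h] at h2
    simpa [Pi.single_apply] using h2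

lemma aux_std {n : ℕ} (B : Matrix (Fin n) (Fin n) ℝ) (x : ℝ) (hx : 0 < x) :
    (Measure.pi fun _ : Fin n => gaussianReal 0 1)
      {y | B.trace + 2 * √(frobSq B) * √x + 2 * opNorm B * x < ∑ i, y i * (B.mulVec y) i}
      ≤ ENNReal.ofReal (Real.exp (-x)) := by
  obtain ⟨b, l, hq, htr, hsq, hop⟩ := aux_spectral B
  have hmeasq : Measurable fun y : Fin n → ℝ => ∑ i, y i * (B.mulVec y) i := by
    unfold Matrix.mulVec dotProduct
    fun_prop
  have hlaw : (Measure.pi fun _ : Fin n => gaussianReal 0 1)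
      = (Measure.pi fun _ : Fin n => gaussianReal 0 1).map
        (fun z => (∑ i, z i • b i : EuclideanSpace ℝ (Fin n)).ofLp) := by
    have h1 := (map_pi_eq_stdGaussian (ι := Fin n)).trans (stdGaussian_eq_map_pi_orthonormalBasis b)
    have h2 := congrArg (fun μ => μ.map (WithLp.ofLp (p := 2) (V := Fin n → ℝ))) h1
    simp only at h2
    rw [Measure.map_map (by fun_prop) (by fun_prop), Measure.map_map (by fun_prop) (by fun_prop)] at h2
    simpa [Function.comp_def] using h2
  rw [hlaw, Measure.map_apply (by fun_prop) (measurableSet_lt measurable_const hmeasq)]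
  have hset : ((fun z : Fin n → ℝ => (∑ i, z i • b i : EuclideanSpace ℝ (Fin n)).ofLp) ⁻¹'
      {y | B.trace + 2 * √(frobSq B) * √x + 2 * opNorm B * x < ∑ i, y i * (B.mulVec y) i})
      = {z : Fin n → ℝ | ∑ i, l i + 2 * √(frobSq B) * √x + 2 * opNorm B * x < ∑ i, l i * z i ^ 2} := by
    ext z
    simp only [Set.mem_preimage, Set.mem_ofPred_eq]
    rw [hq z _ rfl, htr]
  rw [hset]
  rcases (frobSq_nonneg B).eq_or_lt with h0 | h0
  · have hl0 : ∀ i, l i = 0 := by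
      intro i
      rw [← h0] at hsq
      have := Finset.single_le_sum (f := fun i => l i ^ 2) (fun i _ => sq_nonneg _) (Finset.mem_univ i)
      have h2 : l i ^ 2 = 0 := le_antisymm (this.trans hsq) (sq_nonneg _)
      exact pow_eq_zero_iff two_ne_zero |>.1 h2
    have : {z : Fin n → ℝ | ∑ i, l i + 2 * √(frobSq B) * √x + 2 * opNorm B * x < ∑ i, l i * z i ^ 2}
        = ∅ := by
      ext z
      have := mul_nonneg (opNorm_nonneg B) hx.le
      simp [hl0, ← h0]
      linarith
    rw [this]
    simp
  · have h := aux_diag l (√(frobSq B)) (opNorm B) x (Real.sqrt_pos.2 h0) (opNorm_nonneg B) hx hop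
      (by rwa [Real.sq_sqrt h0.le])
    refine le_trans (measure_mono fun z hz => ?_) (ENNReal.le_ofReal_iff_toReal_le (measure_ne_top _ _)
      (Real.exp_pos _).le |>.2 h)
    simp only [Set.mem_ofPred_eq] at hz ⊢
    exact le_of_lt hz

lemma gaussPi_eq_map (n : ℕ) (σ : ℝ) : gaussPi n σ
    = (Measure.pi fun _ : Fin n => gaussianReal 0 1).map (fun z i => σ * z i) := by
  rw [Measure.pi_map_pi (f := fun _ z => σ * z) (fun _ => by fun_prop)]
  simp only [gaussianReal_map_const_mul]
  unfold gaussPi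
  simp
  rfl

/-- **Lemma 3.1 (concentration of a Gaussian chaos of order two)**. -/
theorem gaussian_chaos_concentration
    {n : ℕ} (σ : ℝ)
    {Ω : Type} [MeasurableSpace Ω] (P : Measure Ω) [IsProbabilityMeasure P]
    (ξ : Ω → Fin n → ℝ) (hξ : Measurable ξ) (hlaw : P.map ξ = gaussPi n σ)
    (B : Matrix (Fin n) (Fin n) ℝ) (x : ℝ) (hx : 0 < x) :
    P {ω | σ ^ 2 * B.trace + 2 * σ ^ 2 * Real.sqrt (frobSq B) * Real.sqrt x
             + 2 * σ ^ 2 * opNorm B * x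
           < ∑ i, ξ ω i * (B.mulVec (ξ ω)) i}
      ≤ ENNReal.ofReal (Real.exp (-x)) := by
  have hmeasq : Measurable fun y : Fin n → ℝ => ∑ i, y i * (B.mulVec y) i := by
    unfold Matrix.mulVec dotProduct
    fun_prop
  set c := σ ^ 2 * B.trace + 2 * σ ^ 2 * Real.sqrt (frobSq B) * Real.sqrt x
             + 2 * σ ^ 2 * opNorm B * x with hc
  have hm := measurableSet_lt (measurable_const (a := c)) hmeasq
  have h1 := Measure.map_apply (μ := P) hξ hm
  refine le_trans h1.symm.le ?_
  rw [hlaw, gaussPi_eq_map, Measure.map_apply (by fun_prop) hm]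
  refine le_trans (measure_mono fun z hz => ?_) (aux_std B x hx)
  simp only [Set.mem_preimage, Set.mem_ofPred_eq] at hz ⊢
  have h2 : ∑ i, (σ * z i) * (B.mulVec (fun i => σ * z i)) i
      = σ ^ 2 * ∑ i, z i * (B.mulVec z) i := by
    have : (fun i => σ * z i) = σ • z := rfl
    rw [this, Matrix.mulVec_smul, Finset.mul_sum]
    refine Finset.sum_congr rfl fun i _ => ?_
    simp only [Pi.smul_apply, smul_eq_mul]
    ring
  rw [h2] at hz
  refine lt_of_mul_lt_mul_left (lt_of_le_of_lt (le_of_eq ?_) hz) (sq_nonneg σ)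
  rw [hc]
  ring

end
end
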